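/- Let ω: S² → S⁴ be the S¹-equivariant harmonic sphere ω_{μ₁,μ₂} of the explicit two-parameter family with real parameters μ₁, μ₂ ≥ 0, and suppose the tangent map ŵ(x) = ω(x/|x|) is stable. Then for every S¹-invariant function g ∈ C¹(S²; ℝ) with g(0,0,1) = g(0,0,−1) = 0 one has ∫_{S²} g(y)² |∇ŵ(y)|² dσ(y) ≤ ∫_{S²} ( ¼ g(y)² + |∇ĝ(y)|² + g(y)²/(y₁² + y₂²) ) dσ(y), where ĝ(x) = g(x/|x|) is the degree-zero homogeneous extension of g and σ is the surface measure on S². -/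

import Mathlib

noncomputable section

open MeasureTheory
open scoped Classical

abbrev E3 : Type := EuclideanSpace ℝ (Fin 3)

abbrev V5 : Type := ℝ × ℂ × ℂ

/-- Squared Euclidean norm on ℝ ⊕ ℂ ⊕ ℂ. -/
def nsq (p : V5) : ℝ := p.1 ^ 2 + Complex.normSq p.2.1 + Complex.normSq p.2.2

/-- Real inner product on ℝ ⊕ ℂ ⊕ ℂ. -/
def vdot (p q : V5) : ℝ :=
  p.1 * q.1 + (p.2.1 * (starRingEnd ℂ) q.2.1).re + (p.2.2 * (starRingEnd ℂ) q.2.2).re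

/-- The circle action R_α · (t, ζ₁, ζ₂) = (t, e^{iα}ζ₁, e^{2iα}ζ₂) on ℝ ⊕ ℂ ⊕ ℂ. -/
def circAct (α : ℝ) (p : V5) : V5 :=
  (p.1, Complex.exp (Complex.I * (α : ℂ)) * p.2.1,
    Complex.exp (2 * Complex.I * (α : ℂ)) * p.2.2)

/-- Rotation of ℝ³ by angle α about the x₃-axis. -/
def rot3 (α : ℝ) (x : E3) : E3 :=
  EuclideanSpace.single (0 : Fin 3) (Real.cos α * x 0 - Real.sin α * x 1) +
    EuclideanSpace.single (1 : Fin 3) (Real.sin α * x 0 + Real.cos α * x 1) +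
    EuclideanSpace.single (2 : Fin 3) (x 2)

/-- The unit sphere S² ⊂ ℝ³. -/
def sphere2 : Set E3 := Metric.sphere (0 : E3) 1

def northPole : E3 := EuclideanSpace.single (2 : Fin 3) (1 : ℝ)

def southPole : E3 := EuclideanSpace.single (2 : Fin 3) (-1 : ℝ)

/-- Degree-zero homogeneous extension of a map defined on the sphere. -/
def homExt (ω : E3 → V5) : E3 → V5 := fun x => ω (‖x‖⁻¹ • x)

def homExtR (g : E3 → ℝ) : E3 → ℝ := fun x => g (‖x‖⁻¹ • x)

/-- Squared Euclidean norm of the differential. -/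
def gradSq (f : E3 → V5) (x : E3) : ℝ :=
  ∑ i : Fin 3, nsq (fderiv ℝ f x (EuclideanSpace.single i (1 : ℝ)))

def gradSqR (f : E3 → ℝ) (x : E3) : ℝ :=
  ∑ i : Fin 3, fderiv ℝ f x (EuclideanSpace.single i (1 : ℝ)) ^ 2

/-- Componentwise Euclidean Laplacian. -/
def lap (f : E3 → V5) (x : E3) : V5 :=
  ∑ i : Fin 3,
    fderiv ℝ (fun y => fderiv ℝ f y (EuclideanSpace.single i (1 : ℝ))) x
      (EuclideanSpace.single i (1 : ℝ))

/-- ω : S² → S⁴ is a (smooth) harmonic sphere: it maps the sphere into the unit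
sphere of ℝ ⊕ ℂ ⊕ ℂ, its degree-zero homogeneous extension Q is smooth away from
the origin, and ΔQ + |∇Q|²Q = 0 on ℝ³ ∖ {0}. -/
def IsHarmonicSphere (ω : E3 → V5) : Prop :=
  (∀ x ∈ sphere2, nsq (ω x) = 1) ∧
    ContDiffOn ℝ (⊤ : ℕ∞) (homExt ω) {(0 : E3)}ᶜ ∧
    ∀ x : E3, x ≠ 0 → lap (homExt ω) x + gradSq (homExt ω) x • homExt ω x = 0

/-- S¹-equivariance of a sphere map. -/
def EquivariantS (ω : E3 → V5) : Prop :=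
  ∀ α : ℝ, ∀ x ∈ sphere2, ω (rot3 α x) = circAct α (ω x)

/-- S¹-equivariance of a vector field on ℝ³. -/
def EquivariantV (X : E3 → V5) : Prop :=
  ∀ (α : ℝ) (x : E3), X (rot3 α x) = circAct α (X x)

/-- Tangential part X_T = X - (w·X)w. -/
def tangPart (w X : E3 → V5) : E3 → V5 := fun x => X x - vdot (w x) (X x) • w x

/-- Second variation δ²E₀(w)[X] = ∫ (|∇X_T|² - |∇w|²|X_T|²). -/
def secondVar (w X : E3 → V5) : ℝ :=
  ∫ x : E3, (gradSq (tangPart w X) x - gradSq w x * nsq (tangPart w X x))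

/-- Stability of a tangent map within the S¹-equivariant class. -/
def IsStable (w : E3 → V5) : Prop :=
  ∀ X : E3 → V5, ContDiff ℝ (⊤ : ℕ∞) X → HasCompactSupport X → EquivariantV X →
    0 ≤ secondVar w X

def conj' (z : ℂ) : ℂ := (starRingEnd ℂ) z

/-- The twistor fibration, in homogeneous coordinates on ℂ⁴ ∖ {0}. -/
def tau4 (w0 w1 w2 w3 : ℂ) : V5 :=
  ((Complex.normSq w0 + Complex.normSq w3 - Complex.normSq w1 - Complex.normSq w2) /
      (Complex.normSq w0 + Complex.normSq w1 + Complex.normSq w2 + Complex.normSq w3),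
    2 * (conj' w0 * w1 + conj' w2 * w3) /
      ((Complex.normSq w0 + Complex.normSq w1 + Complex.normSq w2 + Complex.normSq w3 : ℝ) : ℂ),
    2 * (conj' w0 * w2 - conj' w1 * w3) /
      ((Complex.normSq w0 + Complex.normSq w1 + Complex.normSq w2 + Complex.normSq w3 : ℝ) : ℂ))

/-- Inverse stereographic projection ℂ → S² (from the south pole). -/
def stInv (z : ℂ) : E3 :=
  EuclideanSpace.single (0 : Fin 3) (2 * z.re / (1 + Complex.normSq z)) +
    EuclideanSpace.single (1 : Fin 3) (2 * z.im / (1 + Complex.normSq z)) +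
    EuclideanSpace.single (2 : Fin 3) ((1 - Complex.normSq z) / (1 + Complex.normSq z))

/-- Equatorial embedding ω_eq^{(1)}(x) = (x₃, x₁ + ix₂, 0). -/
def omegaEq1 (x : E3) : V5 := (x 2, (x 0 : ℂ) + (x 1 : ℂ) * Complex.I, 0)

/-- Equatorial embedding ω_eq^{(2)}(x) = (x₃, 0, x₁ + ix₂). -/
def omegaEq2 (x : E3) : V5 := (x 2, 0, (x 0 : ℂ) + (x 1 : ℂ) * Complex.I)

/-- The horizontal algebraic curve composed with the twistor fibration. -/
def liftCurve (μ1 μ2 z0 z1 : ℂ) : V5 :=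
  tau4 (z0 ^ 3) (μ1 * z0 ^ 2 * z1) (μ2 * z0 * z1 ^ 2) (-(μ1 * μ2 / 3) * z1 ^ 3)

/-- The explicit two-parameter family ω_{μ₁,μ₂} of equivariant harmonic spheres,
as a map defined on S² via the identification [z₀, z₁] ↦ σ₂⁻¹(z₁/z₀). -/
def omegaFam (μ1 μ2 : ℂ) (x : E3) : V5 :=
  if x = southPole then
    if μ1 = 0 ∧ μ2 = 0 then ((1 : ℝ), 0, 0)
    else if μ1 ≠ 0 ∧ μ2 ≠ 0 then liftCurve μ1 μ2 0 1
    else ((-1 : ℝ), 0, 0)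
  else liftCurve μ1 μ2 ((1 + x 2 : ℝ) : ℂ) ((x 0 : ℂ) + (x 1 : ℂ) * Complex.I)

/-- Wirtinger derivative ∂f/∂z̄ = ½(∂_{x₁} + i ∂_{x₂})f. -/
def wd (f : ℂ → ℂ) (z : ℂ) : ℂ :=
  (1 / 2 : ℂ) * (fderiv ℝ f z 1 + Complex.I * fderiv ℝ f z Complex.I)

/-- Surface (2-dimensional Hausdorff) measure on ℝ³. -/
def surf : Measure E3 := Measure.hausdorffMeasure 2

open Set Filter Topology in
/-- Two finite measures with `ν (ball x r)` independent of `x` in the sphere are proportional. -/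
lemma unif_prop (σ τ : Measure E3) [IsFiniteMeasure σ] [IsFiniteMeasure τ]
    (hσ : σ sphere2ᶜ = 0) (hτ : τ sphere2ᶜ = 0) (hτ0 : τ ≠ 0)
    (h1 : ∀ x ∈ sphere2, ∀ y ∈ sphere2, ∀ r : ℝ, σ (Metric.ball x r) = σ (Metric.ball y r))
    (h2 : ∀ x ∈ sphere2, ∀ y ∈ sphere2, ∀ r : ℝ, τ (Metric.ball x r) = τ (Metric.ball y r))
    (h3 : ∀ x ∈ sphere2, ∀ r : ℝ, 0 < r → τ (Metric.ball x r) ≠ 0) :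
    ∃ c : NNReal, σ = c • τ := by
  have hN : northPole ∈ sphere2 := by simp [northPole, sphere2]
  have hσm : ∀ᵐ x ∂σ, x ∈ sphere2 := by
    rw [ae_iff]; exact hσ
  have hτm : ∀ᵐ x ∂τ, x ∈ sphere2 := by
    rw [ae_iff]; exact hτ
  have hτu : τ.real univ ≠ 0 := by
    simp [Measure.real, ENNReal.toReal_eq_zero_iff, hτ0]
  have hms : ∀ r : ℝ, MeasurableSet {p : E3 × E3 | dist p.1 p.2 < r} := fun r =>
    (isOpen_lt continuous_dist continuous_const).measurableSet
  -- the Fubini identity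
  have key : ∀ r : ℝ, ∀ f : BoundedContinuousFunction E3 ℝ,
      ∫ x, (∫ y in Metric.ball x r, f y ∂τ) ∂σ = σ.real (Metric.ball northPole r) * ∫ y, f y ∂τ := by
    intro r f
    have hIntg : Integrable (fun p : E3 × E3 => ({p : E3 × E3 | dist p.1 p.2 < r}).indicator (fun p => f p.2) p) (σ.prod τ) := by
      apply Integrable.indicator _ (hms r)
      refine Integrable.of_bound (C := ‖f‖) ?_ ?_
      · exact (f.continuous.comp continuous_snd).aestronglyMeasurable
      · exact Eventually.of_forall fun p => f.norm_coe_le_norm _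
    have := integral_integral_swap (f := fun x y => ({p : E3 × E3 | dist p.1 p.2 < r}).indicator (fun p => f p.2) (x, y)) hIntg
    have e1 : ∀ x : E3, ∫ y, ({p : E3 × E3 | dist p.1 p.2 < r}).indicator (fun p => f p.2) (x, y) ∂τ = ∫ y in Metric.ball x r, f y ∂τ := by
      intro x
      rw [← integral_indicator Metric.isOpen_ball.measurableSet]
      congr 1; ext y
      simp only [indicator, mem_ofPred_eq, Metric.mem_ball, dist_comm]
    have e2 : ∀ y ∈ sphere2, ∫ x, ({p : E3 × E3 | dist p.1 p.2 < r}).indicator (fun p => f p.2) (x, y) ∂σ = σ.real (Metric.ball northPole r) * f y := by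
      intro y hy
      have : (fun x => ({p : E3 × E3 | dist p.1 p.2 < r}).indicator (fun p => f p.2) (x, y)) =
          (Metric.ball y r).indicator (fun _ => f y) := by
        ext x
        simp only [indicator, mem_ofPred_eq, Metric.mem_ball]
      rw [this, integral_indicator Metric.isOpen_ball.measurableSet, setIntegral_const, smul_eq_mul]
      simp only [Measure.real, h1 y hy _ hN]
    simp only [e1] at this
    rw [this, integral_congr_ae (hτm.mono e2), integral_const_mul]
  have key1 : ∀ r : ℝ, τ.real (Metric.ball northPole r) * σ.real univ = σ.real (Metric.ball northPole r) * τ.real univ := by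
    intro r
    have := key r (BoundedContinuousFunction.const E3 1)
    simp only [BoundedContinuousFunction.const_apply, integral_const, smul_eq_mul, mul_one,
      measureReal_restrict_apply MeasurableSet.univ, univ_inter] at this
    rw [← this, integral_congr_ae (g := fun _ => τ.real (Metric.ball northPole r))]
    · simp [mul_comm]
    · filter_upwards [hσm] with x hx
      simp only [Measure.real, h2 x hx _ hN]
  obtain ⟨c, hc⟩ : ∃ c : NNReal, (c : ℝ) = σ.real univ / τ.real univ :=
    ⟨⟨σ.real univ / τ.real univ, by positivity⟩, rfl⟩
  refine ⟨c, ?_⟩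
  apply ext_of_forall_integral_eq_of_IsFiniteMeasure
  intro f
  rw [integral_smul_nnreal_measure, NNReal.smul_def, smul_eq_mul]
  rw [hc]
  have hfi : ∀ (ν : Measure E3) [IsFiniteMeasure ν], Integrable f ν := fun ν _ => f.integrable ν
  -- closeness
  have hclose : ∀ ε > 0, |∫ x, f x ∂σ - σ.real univ / τ.real univ * ∫ x, f x ∂τ| ≤ ε * σ.real univ := by
    intro ε hε
    have huc : UniformContinuousOn f sphere2 :=
      (isCompact_sphere _ _).uniformContinuousOn_of_continuous f.continuous.continuousOn
    obtain ⟨r, hr, hfr⟩ := Metric.uniformContinuousOn_iff_le.1 huc ε hε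
    set b := τ.real (Metric.ball northPole r) with hb
    have hb0 : 0 < b := by
      apply ENNReal.toReal_pos (h3 _ hN r hr) (measure_ne_top _ _)
    have hk : σ.real univ / τ.real univ * ∫ x, f x ∂τ = ∫ x, b⁻¹ * (∫ y in Metric.ball x r, f y ∂τ) ∂σ := by
      rw [integral_const_mul, key r f]
      have := key1 r
      field_simp
      linear_combination (∫ x, f x ∂τ) * this
    have hpt : ∀ x ∈ sphere2, |f x - b⁻¹ * (∫ y in Metric.ball x r, f y ∂τ)| ≤ ε := by
      intro x hx
      have hbx : τ.real (Metric.ball x r) = b := by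
        simp only [hb, Measure.real, h2 x hx _ hN]
      have : f x - b⁻¹ * (∫ y in Metric.ball x r, f y ∂τ) = b⁻¹ * ∫ y in Metric.ball x r, (f x - f y) ∂τ := by
        rw [integral_sub (integrable_const _) ((hfi τ).integrableOn), setIntegral_const, hbx, smul_eq_mul]
        field_simp
      rw [this, abs_mul, abs_of_pos (inv_pos.2 hb0), inv_mul_le_iff₀ hb0]
      have := norm_setIntegral_le_of_norm_le_const_ae' (μ := τ) (s := Metric.ball x r) (f := fun y => f x - f y) (C := ε) (measure_lt_top _ _) ?_
      · rw [hbx] at this; rw [mul_comm]; exact this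
      · filter_upwards [hτm] with y hy hyb
        have := hfr x hx y hy (by rw [dist_comm]; exact (Metric.mem_ball.1 hyb).le)
        exact this
    have hmeas : AEStronglyMeasurable (fun x => ∫ y in Metric.ball x r, f y ∂τ) σ := by
      have hsm : StronglyMeasurable (fun p : E3 × E3 => ({p : E3 × E3 | dist p.1 p.2 < r}).indicator (fun p => f p.2) p) :=
        ((f.continuous.comp continuous_snd).stronglyMeasurable).indicator (hms r)
      have := hsm.integral_prod_right' (ν := τ)
      convert this.aestronglyMeasurable using 1
      ext x
      rw [← integral_indicator Metric.isOpen_ball.measurableSet]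
      congr 1; ext y
      simp only [indicator, mem_ofPred_eq, Metric.mem_ball, dist_comm]
    have hIntg2 : Integrable (fun x => b⁻¹ * (∫ y in Metric.ball x r, f y ∂τ)) σ := by
      refine Integrable.of_bound (C := ε + ‖f‖) (hmeas.const_mul _) ?_
      filter_upwards [hσm] with x hx
      have h1 := hpt x hx
      have h2 := f.norm_coe_le_norm x
      rw [Real.norm_eq_abs] at h2 ⊢
      have h3 := abs_sub_abs_le_abs_sub (b⁻¹ * (∫ y in Metric.ball x r, f y ∂τ)) (f x)
      rw [abs_sub_comm] at h3
      linarith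
    rw [hk, ← integral_sub (hfi σ) hIntg2]
    have := norm_integral_le_of_norm_le_const (μ := σ) (C := ε) (f := fun x => f x - b⁻¹ * (∫ y in Metric.ball x r, f y ∂τ)) (hσm.mono hpt)
    exact this
  have : |∫ x, f x ∂σ - σ.real univ / τ.real univ * ∫ x, f x ∂τ| ≤ 0 := by
    refine le_of_forall_pos_le_add fun δ hδ => ?_
    have := hclose (δ / (σ.real univ + 1)) (by positivity)
    refine this.trans ?_
    rw [zero_add, div_mul_eq_mul_div, div_le_iff₀ (by positivity)]
    nlinarith [measureReal_nonneg (μ := σ) (s := univ)]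
  linarith [abs_nonpos_iff.1 this]

/-- The meridian. -/
def sph (θ : ℝ) : E3 :=
  EuclideanSpace.single (0 : Fin 3) (Real.sin θ) + EuclideanSpace.single (2 : Fin 3) (Real.cos θ)

lemma mem_sphere2_iff (y : E3) : y ∈ sphere2 ↔ y 0 ^ 2 + y 1 ^ 2 + y 2 ^ 2 = 1 := by
  have h : ‖y‖ ^ 2 = y 0 ^ 2 + y 1 ^ 2 + y 2 ^ 2 := by
    rw [EuclideanSpace.norm_sq_eq, Fin.sum_univ_three]; simp
  simp only [sphere2, mem_sphere_zero_iff_norm]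
  rw [← h]
  constructor
  · intro h; rw [h]; norm_num
  · intro h; nlinarith [norm_nonneg y]

lemma exists_sph (y : E3) (hy : y ∈ sphere2) :
    ∃ α ∈ Set.Icc (-Real.pi) Real.pi, y = rot3 α (sph (Real.arccos (y 2))) := by
  rw [mem_sphere2_iff] at hy
  have h1 : -1 ≤ y 2 := by nlinarith [sq_nonneg (y 0), sq_nonneg (y 1)]
  have h2 : y 2 ≤ 1 := by nlinarith [sq_nonneg (y 0), sq_nonneg (y 1)]
  set z : ℂ := ⟨y 0, y 1⟩ with hz
  have hn : ‖z‖ = Real.sqrt (1 - y 2 ^ 2) := by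
    rw [Complex.norm_def, Complex.normSq_apply]; congr 1; simp [hz]; linarith
  refine ⟨z.arg, ⟨(Complex.neg_pi_lt_arg z).le, Complex.arg_le_pi z⟩, ?_⟩
  have hre : ‖z‖ * Real.cos z.arg = y 0 := Complex.norm_mul_cos_arg z
  have him : ‖z‖ * Real.sin z.arg = y 1 := Complex.norm_mul_sin_arg z
  ext i
  fin_cases i
  · simp [rot3, sph, Real.sin_arccos, ← hn, ← hre, mul_comm]
  · simp [rot3, sph, Real.sin_arccos, ← hn, ← him, mul_comm]
  · simp [rot3, sph, Real.cos_arccos h1 h2]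

lemma sph_mem (θ : ℝ) : sph θ ∈ sphere2 := by
  rw [mem_sphere2_iff]; simp [sph]

lemma surf_finite : surf sphere2 < ⊤ := by
  set f : (Fin 2 → ℝ) → E3 := fun v => rot3 (v 0) (sph (v 1)) with hf
  have hfc : ContDiff ℝ 1 f := by
    rw [contDiff_euclidean]
    intro i
    fin_cases i <;> simp [hf, rot3, sph] <;> fun_prop
  set K : Set (Fin 2 → ℝ) := Set.Icc (fun _ => -Real.pi) (fun _ => Real.pi) with hK
  have hKc : IsCompact K := isCompact_Icc
  obtain ⟨C, hC⟩ := hfc.contDiffOn.exists_lipschitzOnWith (s := K) one_ne_zero (convex_Icc _ _) hKc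
  have hsub : sphere2 ⊆ f '' K := by
    intro y hy
    obtain ⟨α, hα, h⟩ := exists_sph y hy
    refine ⟨![α, Real.arccos (y 2)], ?_, ?_⟩
    · rw [hK, Set.mem_Icc, Pi.le_def, Pi.le_def]
      constructor <;> intro i <;> fin_cases i
      · exact hα.1
      · simp; linarith [Real.arccos_nonneg (y 2), Real.pi_pos]
      · exact hα.2
      · exact Real.arccos_le_pi _
    · simp [hf, ← h]
  have h1 := hC.hausdorffMeasure_image_le (d := 2) (by norm_num)
  have h2 : Measure.hausdorffMeasure 2 K < ⊤ := by
    have := hausdorffMeasure_pi_real (ι := Fin 2)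
    simp only [Fintype.card_fin, Nat.cast_ofNat] at this
    rw [this]
    exact hKc.measure_lt_top
  calc surf sphere2 ≤ surf (f '' K) := measure_mono hsub
    _ ≤ _ := h1
    _ < ⊤ := ENNReal.mul_lt_top (by simp) h2

/-- The polar surface measure on the sphere pushed forward to the ambient space. -/
def tauM : Measure E3 := (volume : Measure E3).toSphere.map Subtype.val

open scoped Pointwise in
lemma tauM_ball (x : E3) (r : ℝ) : tauM (Metric.ball x r) =
    3 * volume (Set.Ioo (0 : ℝ) 1 • (Metric.ball x r ∩ sphere2)) := by
  rw [tauM, Measure.map_apply measurable_subtype_coe Metric.isOpen_ball.measurableSet,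
    Measure.toSphere_apply' _ (measurable_subtype_coe Metric.isOpen_ball.measurableSet),
    Subtype.image_preimage_coe]
  simp [Set.inter_comm, sphere2]

lemma exists_isom (x y : E3) (hx : x ∈ sphere2) (hy : y ∈ sphere2) : ∃ L : E3 ≃ₗᵢ[ℝ] E3, L x = y := by
  refine ⟨_, Submodule.reflection_sub (v := x) (w := y) ?_⟩
  simp [sphere2] at hx hy
  rw [hx, hy]

lemma image_ball_inter (L : E3 ≃ₗᵢ[ℝ] E3) (x : E3) (r : ℝ) :
    L '' (Metric.ball x r ∩ sphere2) = Metric.ball (L x) r ∩ sphere2 := by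
  rw [Set.image_inter L.injective, LinearIsometryEquiv.image_ball, sphere2,
    LinearIsometryEquiv.image_sphere, map_zero]

open scoped Pointwise in
lemma surf_eq : ∃ c : NNReal, surf.restrict sphere2 = c • tauM := by
  have hms : MeasurableSet sphere2 := Metric.isClosed_sphere.measurableSet
  have : IsFiniteMeasure (surf.restrict sphere2) := ⟨by simpa using surf_finite⟩
  have : IsFiniteMeasure tauM := by unfold tauM; infer_instance
  apply unif_prop
  · simp [hms]
  · rw [tauM, Measure.map_apply measurable_subtype_coe hms.compl]
    convert measure_empty (μ := (volume : Measure E3).toSphere)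
    ext x
    simpa [sphere2] using norm_eq_of_mem_sphere x
  · intro h
    have := congrArg (fun μ => μ Set.univ) h
    simp only [tauM, Measure.map_apply measurable_subtype_coe MeasurableSet.univ] at this
    simp at this
    linarith [Real.pi_pos]
  · intro x hx y hy r
    obtain ⟨L, rfl⟩ := exists_isom x y hx hy
    rw [Measure.restrict_apply Metric.isOpen_ball.measurableSet, Measure.restrict_apply Metric.isOpen_ball.measurableSet,
      ← image_ball_inter, surf]
    exact (L.toIsometryEquiv.hausdorffMeasure_image 2 _).symm
  · intro x hx y hy r
    obtain ⟨L, rfl⟩ := exists_isom x y hx hy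
    rw [tauM_ball, tauM_ball, ← image_ball_inter]
    congr 1
    have : Set.Ioo (0 : ℝ) 1 • (L '' (Metric.ball x r ∩ sphere2)) = L '' (Set.Ioo (0 : ℝ) 1 • (Metric.ball x r ∩ sphere2)) := by
      rw [← Set.image2_smul, ← Set.image2_smul, Set.image_image2, Set.image2_image_right]
      simp
    rw [this]
    have h := L.symm.measurePreserving.measure_preimage_emb (L.symm.toHomeomorph.measurableEmbedding) (Set.Ioo (0 : ℝ) 1 • (Metric.ball x r ∩ sphere2))
    rw [← h]
    congr 1
    ext z
    simp only [Set.mem_preimage, Set.mem_image]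
    constructor
    · intro hz; exact ⟨_, hz, by simp⟩
    · rintro ⟨w, hw, rfl⟩; simpa using hw
  · intro x hx r hr
    rw [tauM, Measure.map_apply measurable_subtype_coe Metric.isOpen_ball.measurableSet]
    apply IsOpen.measure_ne_zero
    · exact Metric.isOpen_ball.preimage continuous_subtype_val
    · exact ⟨⟨x, hx⟩, by simpa using hr⟩

open Set Filter Topology in
/-- The one-dimensional Hardy near-optimizers. -/
lemma exists_eta (ε : ℝ) (hε : 0 < ε) : ∃ (η : ℝ → ℝ) (δ R : ℝ), 0 < δ ∧ 
    (∀ r > 0, ContDiffAt ℝ (⊤ : ℕ∞) η r) ∧ (∀ r > 0, r < δ → η r = 0) ∧ (∀ r, R < r → η r = 0) ∧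
    IntegrableOn (fun r => r ^ 2 * deriv η r ^ 2) (Ioi 0) ∧ IntegrableOn (fun r => η r ^ 2) (Ioi 0) ∧
    0 < ∫ r in Ioi (0 : ℝ), η r ^ 2 ∧
    ∫ r in Ioi (0 : ℝ), r ^ 2 * deriv η r ^ 2 ≤ (1 / 4 + ε) * ∫ r in Ioi (0 : ℝ), η r ^ 2 := by
  obtain ⟨ψ, hψs, hψc, hψ0, hψ1⟩ : ∃ ψ : ℝ → ℝ, ContDiff ℝ (⊤ : ℕ∞) ψ ∧ HasCompactSupport ψ ∧
      (∀ t, 2 ≤ |t| → ψ t = 0) ∧ ψ 0 = 1 := by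
    let b : ContDiffBump (0 : ℝ) := ⟨1, 2, by norm_num, by norm_num⟩
    exact ⟨b, b.contDiff, b.hasCompactSupport, fun t ht => b.zero_of_le_dist (by simpa using ht),
      b.one_of_mem_closedBall (by simp [b])⟩
  have hψd : ∀ t, HasDerivAt ψ (deriv ψ t) t := fun t => (hψs.differentiable (by simp) t).hasDerivAt
  have hdc : Continuous (deriv ψ) := hψs.continuous_deriv (by simp)
  have hsq : HasCompactSupport (fun t => ψ t ^ 2) := hψc.comp_left (g := fun x => x ^ 2) (by simp)
  have hdsq : HasCompactSupport (fun t => deriv ψ t ^ 2) := hψc.deriv.comp_left (g := fun x => x ^ 2) (by simp)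
  have hi1 : Integrable (fun t => ψ t ^ 2) := (hψs.continuous.pow 2).integrable_of_hasCompactSupport hsq
  have hi2 : Integrable (fun t => deriv ψ t ^ 2) := (hdc.pow 2).integrable_of_hasCompactSupport hdsq
  have hi3 : Integrable (fun t => ψ t * deriv ψ t) :=
    (hψs.continuous.mul hdc).integrable_of_hasCompactSupport hψc.mul_right
  have hB : 0 < ∫ t, ψ t ^ 2 := by
    apply (hψs.continuous.pow 2).integral_pos_of_hasCompactSupport_nonneg_nonzero hsq
      (fun t => sq_nonneg _) (x := 0)
    simp [hψ1]
  have h0 : ∫ t, ψ t * deriv ψ t = 0 := by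
    have := integral_eq_zero_of_hasDerivAt_of_integrable (f := fun t => ψ t ^ 2) (f' := fun t => 2 * (ψ t * deriv ψ t))
      (fun t => by
        have := (hψd t).fun_pow 2
        refine this.congr_deriv ?_
        simp only [Nat.cast_ofNat, Nat.add_one_sub_one, pow_one]; ring) (hi3.const_mul 2) hi1
    rw [integral_const_mul] at this
    linarith
  set B := ∫ t, ψ t ^ 2
  set D := ∫ t, deriv ψ t ^ 2 with hD
  have hD0 : 0 ≤ D := integral_nonneg fun t => by positivity
  obtain ⟨n, hn1, hn⟩ : ∃ n : ℝ, 1 ≤ n ∧ D ≤ ε * B * n := by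
    refine ⟨max 1 (D / (ε * B)), le_max_left _ _, ?_⟩
    have := le_max_right 1 (D / (ε * B))
    rw [div_le_iff₀ (by positivity)] at this
    linarith
  have hn0 : 0 < n := by linarith
  set η : ℝ → ℝ := fun r => Real.exp (-(Real.log r / 2)) * ψ (Real.log r / n) with hη
  have hηe : ∀ t, η (Real.exp t) = Real.exp (-(t / 2)) * ψ (t / n) := fun t => by simp [hη]
  have hder : ∀ t, deriv η (Real.exp t) = Real.exp (-t) * (Real.exp (-(t / 2)) * (deriv ψ (t / n) / n - ψ (t / n) / 2)) := by
    intro t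
    have h1 := Real.hasDerivAt_log (Real.exp_pos t).ne'
    have h2 : HasDerivAt (fun r => ψ (Real.log r / n)) _ (Real.exp t) :=
      (hψd (Real.log (Real.exp t) / n)).comp (Real.exp t) (h1.div_const n)
    have h3 := ((h1.div_const 2).neg.exp).mul h2
    have h4 : deriv η (Real.exp t) = _ := h3.deriv
    rw [h4]
    simp only [Pi.neg_apply, Real.log_exp, Real.exp_neg t]
    ring
  have himg : Real.exp '' univ = Ioi 0 := by rw [image_univ, Real.range_exp]
  have hcv : ∀ f : ℝ → ℝ, ∫ r in Ioi (0 : ℝ), f r = ∫ t, Real.exp t * f (Real.exp t) := by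
    intro f
    have := integral_image_eq_integral_abs_deriv_smul (s := univ) (f := Real.exp) (f' := Real.exp) MeasurableSet.univ
      (fun x _ => (Real.hasDerivAt_exp x).hasDerivWithinAt) Real.exp_injective.injOn f
    rw [himg] at this
    simpa using this
  have hci : ∀ f : ℝ → ℝ, IntegrableOn f (Ioi (0 : ℝ)) ↔ Integrable fun t => Real.exp t * f (Real.exp t) := by
    intro f
    have := integrableOn_image_iff_integrableOn_abs_deriv_smul (s := univ) (f := Real.exp) (f' := Real.exp) MeasurableSet.univ
      (fun x _ => (Real.hasDerivAt_exp x).hasDerivWithinAt) Real.exp_injective.injOn f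
    rw [himg] at this
    simpa using this
  have hee : ∀ t, Real.exp t * Real.exp (-(t / 2)) ^ 2 = 1 := by
    intro t
    rw [← Real.exp_nat_mul, ← Real.exp_add]; norm_num; ring
  have e1 : (fun t => Real.exp t * (fun r => η r ^ 2) (Real.exp t)) = fun t => ψ (t / n) ^ 2 := by
    ext t
    simp only [hηe]
    linear_combination (ψ (t / n)) ^ 2 * hee t
  have e2 : (fun t => Real.exp t * (fun r => r ^ 2 * deriv η r ^ 2) (Real.exp t)) = fun t =>
      ((n ^ 2)⁻¹ * deriv ψ (t / n) ^ 2 + 1 / 4 * ψ (t / n) ^ 2) - n⁻¹ * (ψ (t / n) * deriv ψ (t / n)) := by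
    ext t
    simp only [hder]
    have h5 : Real.exp t * Real.exp (-t) = 1 := by rw [← Real.exp_add]; simp
    have : Real.exp t * (Real.exp t ^ 2 * (Real.exp (-t) * (Real.exp (-(t / 2)) * (deriv ψ (t / n) / n - ψ (t / n) / 2))) ^ 2)
      = (Real.exp t * Real.exp (-t)) ^ 2 * (Real.exp t * Real.exp (-(t / 2)) ^ 2) * (deriv ψ (t / n) / n - ψ (t / n) / 2) ^ 2 := by ring
    rw [this, h5, hee]
    field_simp
    ring
  have hi1' : Integrable (fun t => ψ (t / n) ^ 2) := hi1.comp_div hn0.ne'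
  have hi2' : Integrable (fun t => deriv ψ (t / n) ^ 2) := hi2.comp_div hn0.ne'
  have hi3' : Integrable (fun t => ψ (t / n) * deriv ψ (t / n)) := hi3.comp_div hn0.ne'
  have E1 : ∫ r in Ioi (0 : ℝ), η r ^ 2 = n * B := by
    rw [hcv, e1, Measure.integral_comp_div (fun t => ψ t ^ 2) n, abs_of_pos hn0]; rfl
  have E2 : ∫ r in Ioi (0 : ℝ), r ^ 2 * deriv η r ^ 2 = n⁻¹ * D + 1 / 4 * (n * B) := by
    have hadd : Integrable (fun t => (n ^ 2)⁻¹ * deriv ψ (t / n) ^ 2 + 1 / 4 * ψ (t / n) ^ 2) :=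
      (hi2'.const_mul _).add (hi1'.const_mul _)
    rw [hcv, e2, integral_sub hadd (hi3'.const_mul _),
      integral_add (hi2'.const_mul _) (hi1'.const_mul _), integral_const_mul, integral_const_mul, integral_const_mul,
      Measure.integral_comp_div (fun t => ψ t ^ 2) n, Measure.integral_comp_div (fun t => deriv ψ t ^ 2) n,
      Measure.integral_comp_div (fun t => ψ t * deriv ψ t) n, h0, abs_of_pos hn0]
    simp only [smul_eq_mul, mul_zero, sub_zero, ← hD]
    field_simp
    rfl
  refine ⟨η, Real.exp (-(2 * n)), Real.exp (2 * n), Real.exp_pos _, ?_, ?_, ?_, ?_, ?_, ?_, ?_⟩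
  · intro r hr
    have : ContDiffAt ℝ (⊤ : ℕ∞) Real.log r := Real.contDiffAt_log.2 hr.ne'
    exact ((this.div_const 2).neg.exp).mul (hψs.contDiffAt.comp r (this.div_const n))
  · intro r hr hrd
    have : Real.log r < -(2 * n) := by rwa [Real.log_lt_iff_lt_exp hr]
    have h : ψ (Real.log r / n) = 0 := by
      apply hψ0
      rw [abs_div, abs_of_pos hn0, le_div_iff₀ hn0]
      linarith [neg_le_abs (Real.log r)]
    simp [hη, h]
  · intro r hrd
    have hr : 0 < r := (Real.exp_pos _).trans hrd
    have : 2 * n < Real.log r := by rwa [Real.lt_log_iff_exp_lt hr]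
    have h : ψ (Real.log r / n) = 0 := by
      apply hψ0
      rw [abs_div, abs_of_pos hn0, le_div_iff₀ hn0]
      linarith [le_abs_self (Real.log r)]
    simp [hη, h]
  · rw [hci, e2]
    exact ((hi2'.const_mul _).add (hi1'.const_mul _)).sub (hi3'.const_mul _)
  · rw [hci, e1]; exact hi1'
  · rw [E1]; positivity
  · rw [E1, E2]
    have : n⁻¹ * D ≤ ε * (n * B) := by
      rw [inv_mul_le_iff₀ hn0]
      have : ε * B * n * 1 ≤ ε * B * n * n := by gcongr
      linarith
    linarith

open Set Filter Topology in
/-- Integration in polar coordinates of a function that separates. -/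
lemma polar_sep (f p q : E3 → ℝ) (a b : ℝ → ℝ)
    (hf : ∀ r > 0, ∀ y ∈ sphere2, f (r • y) = a r * p y + b r * q y)
    (ha : IntegrableOn (fun r => r ^ 2 * a r) (Ioi 0)) (hb : IntegrableOn (fun r => r ^ 2 * b r) (Ioi 0))
    (hp : Integrable p tauM) (hq : Integrable q tauM) :
    ∫ x, f x = (∫ r in Ioi (0 : ℝ), r ^ 2 * a r) * ∫ y, p y ∂tauM +
      (∫ r in Ioi (0 : ℝ), r ^ 2 * b r) * ∫ y, q y ∂tauM := by
  have hdim : Module.finrank ℝ E3 - 1 = 2 := by simp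
  have hemb : MeasurableEmbedding (Subtype.val : Metric.sphere (0 : E3) 1 → E3) :=
    MeasurableEmbedding.subtype_coe Metric.isClosed_sphere.measurableSet
  have hvi : ∀ a : ℝ → ℝ, ∫ x : Ioi (0 : ℝ), a x ∂Measure.volumeIoiPow 2 = ∫ r in Ioi (0 : ℝ), r ^ 2 * a r := by
    intro a
    simp only [Measure.volumeIoiPow, ENNReal.ofReal]
    rw [integral_withDensity_eq_integral_smul,
        integral_subtype_comap measurableSet_Ioi fun x ↦ Real.toNNReal (x ^ 2) • a x,
        setIntegral_congr_fun measurableSet_Ioi fun x hx ↦ ?_]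
    · rw [NNReal.smul_def, Real.coe_toNNReal _ (pow_nonneg hx.out.le _), smul_eq_mul]
    · exact (measurable_subtype_coe.pow_const _).real_toNNReal
  have hvI : ∀ a : ℝ → ℝ, IntegrableOn (fun r => r ^ 2 * a r) (Ioi 0) →
      Integrable (fun x : Ioi (0 : ℝ) => a x) (Measure.volumeIoiPow 2) := by
    intro a ha
    rw [integrableOn_iff_comap_subtypeVal measurableSet_Ioi] at ha
    rw [Measure.volumeIoiPow, integrable_withDensity_iff_integrable_smul']
    · refine ha.congr (Eventually.of_forall ?_)
      rintro ⟨x, hx : 0 < x⟩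
      simp [ENNReal.toReal_ofReal (pow_nonneg hx.le 2)]
    · fun_prop
    · simp
  have hvT : ∀ p : E3 → ℝ, Integrable p tauM → Integrable (fun y : Metric.sphere (0 : E3) 1 => p y) (volume : Measure E3).toSphere := by
    intro p hp
    exact (hemb.integrable_map_iff).1 hp
  have hvt : ∀ p : E3 → ℝ, ∫ y, p y ∂tauM = ∫ y : Metric.sphere (0 : E3) 1, p y ∂(volume : Measure E3).toSphere := by
    intro p
    exact hemb.integral_map p
  calc ∫ x, f x = ∫ x : ({(0 : E3)}ᶜ : Set E3), f x ∂((volume : Measure E3).comap (↑)) := by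
        rw [integral_subtype_comap (measurableSet_singleton _).compl fun x ↦ f x, restrict_compl_singleton]
    _ = ∫ z : Metric.sphere (0 : E3) 1 × Ioi (0 : ℝ), f (z.2.1 • z.1.1) ∂(volume : Measure E3).toSphere.prod (Measure.volumeIoiPow (Module.finrank ℝ E3 - 1)) := by
        have := (volume : Measure E3).measurePreserving_homeomorphUnitSphereProd.integral_comp
          (Homeomorph.measurableEmbedding _) (fun z => f (z.2.1 • z.1.1))
        rw [← this]
        refine integral_congr_ae (Eventually.of_forall ?_)
        rintro ⟨x, hx⟩
        have hx' : ‖x‖ ≠ 0 := by simpa using hx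
        simp [smul_smul, hx']
    _ = ∫ z : Metric.sphere (0 : E3) 1 × Ioi (0 : ℝ), (p z.1 * a z.2 + q z.1 * b z.2) ∂(volume : Measure E3).toSphere.prod (Measure.volumeIoiPow 2) := by
        rw [hdim]
        refine integral_congr_ae (Eventually.of_forall ?_)
        rintro ⟨y, r⟩
        simp only
        rw [hf r.1 r.2 y.1 y.2]; ring
    _ = _ := by
        rw [integral_add ((hvT p hp).mul_prod (hvI a ha)) ((hvT q hq).mul_prod (hvI b hb))]
        rw [integral_prod_mul (fun y : Metric.sphere (0 : E3) 1 => p y) (fun r : Ioi (0 : ℝ) => a r), integral_prod_mul (fun y : Metric.sphere (0 : E3) 1 => q y) (fun r : Ioi (0 : ℝ) => b r),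
          hvi, hvi, hvt, hvt]
        ring

lemma norm_sq_E3 (x : E3) : ‖x‖ ^ 2 = x 0 ^ 2 + x 1 ^ 2 + x 2 ^ 2 := by
  rw [EuclideanSpace.norm_sq_eq, Fin.sum_univ_three]; simp

lemma hasFDerivAt_coord (i : Fin 3) (x : E3) :
    HasFDerivAt (fun y : E3 => y i) (EuclideanSpace.proj i : E3 →L[ℝ] ℝ) x :=
  (EuclideanSpace.proj i : E3 →L[ℝ] ℝ).hasFDerivAt

lemma hasFDerivAt_quot {f h : E3 → ℝ} {F H : E3 →L[ℝ] ℝ} {x : E3} (hf : HasFDerivAt f F x)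
    (hh : HasFDerivAt h H x) (h0 : h x ≠ 0) :
    HasFDerivAt (fun y => f y / h y) ((h x)⁻¹ • F - (f x / h x ^ 2) • H) x := by
  have h1 := (hasDerivAt_inv h0).comp_hasFDerivAt x hh
  have h2 := hf.mul h1
  refine (h2.congr_fderiv ?_).congr_of_eventuallyEq (Filter.Eventually.of_forall fun y => ?_)
  · ext v
    simp
    field_simp
    ring
  · simp [div_eq_mul_inv]

lemma hasFDerivAt_sq {f : E3 → ℝ} {F : E3 →L[ℝ] ℝ} {x : E3} (hf : HasFDerivAt f F x) :
    HasFDerivAt (fun y => f y ^ 2) ((2 * f x) • F) x := by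
  have h2 := hf.mul hf
  refine (h2.congr_fderiv ?_).congr_of_eventuallyEq (Filter.Eventually.of_forall fun y => ?_)
  · ext v
    simp
    ring
  · simp [sq]

/-- The profile `η(r) k(x₃/r)`. -/
def uf (η k : ℝ → ℝ) (x : E3) : ℝ := η ‖x‖ * k (x 2 / ‖x‖)

lemma uf_deriv (η k : ℝ → ℝ) (x : E3) (hx : x ≠ 0) (η' k' : ℝ) (hη : HasDerivAt η η' ‖x‖)
    (hk : HasDerivAt k k' (x 2 / ‖x‖)) :
    ∃ U : E3 →L[ℝ] ℝ, HasFDerivAt (uf η k) U x ∧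
      ∑ i : Fin 3, U (EuclideanSpace.single i 1) ^ 2 = η' ^ 2 * k (x 2 / ‖x‖) ^ 2 +
        η ‖x‖ ^ 2 * k' ^ 2 * ((1 - (x 2 / ‖x‖) ^ 2) / ‖x‖ ^ 2) := by
  have hr : ‖x‖ ≠ 0 := norm_ne_zero_iff.2 hx
  have hn : HasFDerivAt (fun y : E3 => ‖y‖) (‖x‖⁻¹ • innerSL ℝ x) x := by
    have h1 := ((hasStrictFDerivAt_norm_sq x).hasFDerivAt).sqrt (by positivity)
    simp only [Real.sqrt_sq (norm_nonneg _)] at h1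
    refine h1.congr_fderiv ?_
    ext v
    simp
    field_simp
  have hs := hasFDerivAt_quot (hasFDerivAt_coord 2 x) hn hr
  have hu := (hη.comp_hasFDerivAt x hn).mul (hk.comp_hasFDerivAt x hs)
  refine ⟨_, hu, ?_⟩
  have hsq := norm_sq_E3 x
  simp [Fin.sum_univ_three, EuclideanSpace.inner_single_right]
  set r := ‖x‖
  set K := k (x 2 / r)
  set H := η r
  clear_value K H
  field_simp
  have h2 : x 0 ^ 2 + x 1 ^ 2 = r ^ 2 - x 2 ^ 2 := by linarith
  rw [h2]
  ring

lemma ang_deriv (x : E3) (hx : x 0 ^ 2 + x 1 ^ 2 ≠ 0) :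
    ∃ A B : E3 →L[ℝ] ℝ, HasFDerivAt (fun y : E3 => y 0 / Real.sqrt (y 0 ^ 2 + y 1 ^ 2)) A x ∧
      HasFDerivAt (fun y : E3 => y 1 / Real.sqrt (y 0 ^ 2 + y 1 ^ 2)) B x ∧
      (∀ v, x 0 * A v + x 1 * B v = 0) ∧
      ∑ i : Fin 3, (A (EuclideanSpace.single i 1) ^ 2 + B (EuclideanSpace.single i 1) ^ 2) = 1 / (x 0 ^ 2 + x 1 ^ 2) := by
  have hr : Real.sqrt (x 0 ^ 2 + x 1 ^ 2) ≠ 0 := by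
    rw [Real.sqrt_ne_zero']; positivity
  have hρ := ((hasFDerivAt_sq (hasFDerivAt_coord 0 x)).add (hasFDerivAt_sq (hasFDerivAt_coord 1 x))).sqrt hx
  have ha := hasFDerivAt_quot (hasFDerivAt_coord 0 x) hρ hr
  have hb := hasFDerivAt_quot (hasFDerivAt_coord 1 x) hρ hr
  refine ⟨_, _, ha, hb, ?_, ?_⟩
  · intro v
    have hsq := Real.sq_sqrt (show 0 ≤ x 0 ^ 2 + x 1 ^ 2 by positivity)
    simp
    set ρ := Real.sqrt (x 0 ^ 2 + x 1 ^ 2)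
    clear_value ρ
    field_simp
    linear_combination (x 0 * v 0 + x 1 * v 1) * hsq
  · have hsq := Real.sq_sqrt (show 0 ≤ x 0 ^ 2 + x 1 ^ 2 by positivity)
    rw [← hsq]
    simp [Fin.sum_univ_three]
    set ρ := Real.sqrt (x 0 ^ 2 + x 1 ^ 2)
    clear_value ρ
    field_simp
    rw [show ρ ^ 4 = (ρ ^ 2) ^ 2 by ring, hsq]
    ring

/-- The test vector field. -/
def Xf (η k : ℝ → ℝ) (x : E3) : V5 :=
  (0, ((-(x 1 / Real.sqrt (x 0 ^ 2 + x 1 ^ 2) * uf η k x) : ℝ) : ℂ) +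
    ((x 0 / Real.sqrt (x 0 ^ 2 + x 1 ^ 2) * uf η k x : ℝ) : ℂ) * Complex.I, 0)

lemma normSq_add_mul_I' (a b : ℝ) : Complex.normSq ((a : ℂ) + (b : ℂ) * Complex.I) = a ^ 2 + b ^ 2 :=
  Complex.normSq_add_mul_I a b

lemma cos_sin_sq (x : E3) (hx : x 0 ^ 2 + x 1 ^ 2 ≠ 0) :
    (x 0 / Real.sqrt (x 0 ^ 2 + x 1 ^ 2)) ^ 2 + (x 1 / Real.sqrt (x 0 ^ 2 + x 1 ^ 2)) ^ 2 = 1 := by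
  rw [div_pow, div_pow, Real.sq_sqrt (by positivity)]
  field_simp

lemma nsq_Xf (η k : ℝ → ℝ) (x : E3) (hx : x 0 ^ 2 + x 1 ^ 2 ≠ 0) :
    nsq (Xf η k x) = uf η k x ^ 2 := by
  have := cos_sin_sq x hx
  simp only [nsq, Xf, normSq_add_mul_I', map_zero]
  linear_combination uf η k x ^ 2 * this

lemma gradSq_Xf (η k : ℝ → ℝ) (x : E3) (hx : x 0 ^ 2 + x 1 ^ 2 ≠ 0) (η' k' : ℝ)
    (hη : HasDerivAt η η' ‖x‖) (hk : HasDerivAt k k' (x 2 / ‖x‖)) :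
    gradSq (Xf η k) x = η' ^ 2 * k (x 2 / ‖x‖) ^ 2 +
        η ‖x‖ ^ 2 * k' ^ 2 * ((1 - (x 2 / ‖x‖) ^ 2) / ‖x‖ ^ 2) + uf η k x ^ 2 / (x 0 ^ 2 + x 1 ^ 2) := by
  have hx0 : x ≠ 0 := by rintro rfl; simp at hx
  obtain ⟨U, hU, hUs⟩ := uf_deriv η k x hx0 η' k' hη hk
  obtain ⟨A, B, hA, hB, hAB, hABs⟩ := ang_deriv x hx
  have hcs := cos_sin_sq x hx
  have hr : Real.sqrt (x 0 ^ 2 + x 1 ^ 2) ≠ 0 := by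
    rw [Real.sqrt_ne_zero']; positivity
  have h1 := Complex.ofRealCLM.hasFDerivAt.comp x (hB.mul hU).neg
  have h2 := (Complex.ofRealCLM.hasFDerivAt.comp x (hA.mul hU)).mul_const Complex.I
  have h3 : HasFDerivAt (Xf η k) _ x :=
    (hasFDerivAt_const (0 : ℝ) x).prodMk ((h1.add h2).prodMk (hasFDerivAt_const (0 : ℂ) x))
  have hval : ∀ v, nsq (fderiv ℝ (Xf η k) x v) = uf η k x ^ 2 * (A v ^ 2 + B v ^ 2) + U v ^ 2 := by
    intro v
    rw [h3.fderiv]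
    set a := x 0 / Real.sqrt (x 0 ^ 2 + x 1 ^ 2) with ha
    set b := x 1 / Real.sqrt (x 0 ^ 2 + x 1 ^ 2) with hb
    have hab : a * A v + b * B v = 0 := by
      have := hAB v
      rw [ha, hb]
      field_simp
      linarith
    simp [nsq, Complex.normSq_apply]
    linear_combination U v ^ 2 * hcs + 2 * uf η k x * U v * hab
  unfold gradSq
  simp only [hval]
  rw [Finset.sum_add_distrib, ← Finset.mul_sum, hABs, hUs]
  ring

lemma Xf_axis (η k : ℝ → ℝ) (x : E3) (hx : x 0 ^ 2 + x 1 ^ 2 = 0) : Xf η k x = 0 := by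
  simp [Xf, hx]

lemma Xf_zero (η k : ℝ → ℝ) (x : E3) (hx : uf η k x = 0) : Xf η k x = 0 := by
  simp [Xf, hx]

open Filter Topology in
lemma Xf_eventually (η k : ℝ → ℝ) (δ a : ℝ) (hδ : 0 < δ) (ha : a < 1)
    (hη0 : ∀ r > 0, r < δ → η r = 0) (hk0 : ∀ s, a ≤ |s| → k s = 0) (x : E3)
    (hx : x 0 ^ 2 + x 1 ^ 2 = 0) : Xf η k =ᶠ[𝓝 x] fun _ => 0 := by
  by_cases hx0 : x = 0
  · subst hx0
    filter_upwards [Metric.ball_mem_nhds (0 : E3) hδ] with y hy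
    by_cases hy0 : y = 0
    · subst hy0; exact Xf_axis _ _ _ hx
    · apply Xf_zero
      rw [uf, hη0 _ (norm_pos_iff.2 hy0) (by simpa using hy), zero_mul]
  · have hn : ‖x‖ ≠ 0 := norm_ne_zero_iff.2 hx0
    have h1 : |x 2 / ‖x‖| = 1 := by
      have := norm_sq_E3 x
      rw [hx, zero_add] at this
      rw [abs_div, abs_norm, (sq_eq_sq₀ (norm_nonneg _) (abs_nonneg _)).1 (this.trans (sq_abs _).symm)]
      refine div_self ?_
      intro h
      rw [abs_eq_zero] at h
      rw [h] at this
      simp at this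
      exact hx0 this
    have hc : ContinuousAt (fun y : E3 => |y 2 / ‖y‖|) x := by
      have : ContinuousAt (fun y : E3 => y 2) x := by fun_prop
      exact (this.div continuous_norm.continuousAt hn).abs
    have := hc.eventually (lt_mem_nhds (show a < |x 2 / ‖x‖| by rw [h1]; exact ha))
    filter_upwards [this] with y hy
    apply Xf_zero
    rw [uf, hk0 _ hy.le, mul_zero]

open Filter Topology in
lemma Xf_contDiff (η k : ℝ → ℝ) (δ a : ℝ) (hδ : 0 < δ) (ha : a < 1)
    (hη : ∀ r > 0, ContDiffAt ℝ (⊤ : ℕ∞) η r) (hk : ContDiff ℝ (⊤ : ℕ∞) k)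
    (hη0 : ∀ r > 0, r < δ → η r = 0) (hk0 : ∀ s, a ≤ |s| → k s = 0) :
    ContDiff ℝ (⊤ : ℕ∞) (Xf η k) := by
  rw [contDiff_iff_contDiffAt]
  intro x
  by_cases hx : x 0 ^ 2 + x 1 ^ 2 = 0
  · exact contDiffAt_const.congr_of_eventuallyEq (Xf_eventually η k δ a hδ ha hη0 hk0 x hx)
  · have hx0 : x ≠ 0 := by rintro rfl; simp at hx
    have hn : ContDiffAt ℝ (⊤ : ℕ∞) (fun y : E3 => ‖y‖) x := contDiffAt_norm ℝ hx0
    have hc : ∀ i : Fin 3, ContDiffAt ℝ (⊤ : ℕ∞) (fun y : E3 => y i) x := fun i => by fun_prop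
    have hu : ContDiffAt ℝ (⊤ : ℕ∞) (uf η k) x :=
      ((hη _ (norm_pos_iff.2 hx0)).comp x hn).mul
        (hk.contDiffAt.comp x ((hc 2).div hn (norm_ne_zero_iff.2 hx0)))
    have hρ : ContDiffAt ℝ (⊤ : ℕ∞) (fun y : E3 => Real.sqrt (y 0 ^ 2 + y 1 ^ 2)) x :=
      (((hc 0).pow 2).add ((hc 1).pow 2)).sqrt hx
    have hr : Real.sqrt (x 0 ^ 2 + x 1 ^ 2) ≠ 0 := by
      rw [Real.sqrt_ne_zero']; positivity
    have h1 := Complex.ofRealCLM.contDiff.contDiffAt.comp x (((hc 1).div hρ hr).mul hu).neg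
    have h2 := (Complex.ofRealCLM.contDiff.contDiffAt.comp x (((hc 0).div hρ hr).mul hu)).mul
      (contDiffAt_const (c := Complex.I))
    exact contDiffAt_const.prodMk ((h1.add h2).prodMk contDiffAt_const)

lemma Xf_compact (η k : ℝ → ℝ) (R : ℝ) (hη0 : ∀ r, R < r → η r = 0) : HasCompactSupport (Xf η k) := by
  apply HasCompactSupport.of_support_subset_isCompact (isCompact_closedBall (0 : E3) R)
  intro x hx
  by_contra h
  simp only [Metric.mem_closedBall, dist_zero_right, not_le] at h
  exact hx (Xf_zero _ _ _ (by rw [uf, hη0 _ h, zero_mul]))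

lemma rot3_coords (α : ℝ) (x : E3) : rot3 α x 0 = Real.cos α * x 0 - Real.sin α * x 1 ∧
    rot3 α x 1 = Real.sin α * x 0 + Real.cos α * x 1 ∧ rot3 α x 2 = x 2 := by
  simp [rot3]

lemma Xf_equiv (η k : ℝ → ℝ) : EquivariantV (Xf η k) := by
  intro α x
  obtain ⟨h0, h1, h2⟩ := rot3_coords α x
  have hs : (rot3 α x 0) ^ 2 + (rot3 α x 1) ^ 2 = x 0 ^ 2 + x 1 ^ 2 := by
    rw [h0, h1]
    linear_combination (x 0 ^ 2 + x 1 ^ 2) * Real.sin_sq_add_cos_sq α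
  have hn : ‖rot3 α x‖ = ‖x‖ := by
    rw [← sq_eq_sq₀ (norm_nonneg _) (norm_nonneg _), norm_sq_E3, norm_sq_E3, hs, h2]
  have hu : uf η k (rot3 α x) = uf η k x := by rw [uf, uf, hn, h2]
  have he : Complex.exp (Complex.I * (α : ℂ)) = (Real.cos α : ℂ) + (Real.sin α : ℂ) * Complex.I := by
    rw [mul_comm, Complex.exp_mul_I]; simp
  simp only [Xf, circAct, hs, hu]
  generalize Real.sqrt (x 0 ^ 2 + x 1 ^ 2) = ρ
  simp only [h0, h1, he]
  refine Prod.ext rfl (Prod.ext ?_ ?_)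
  · apply Complex.ext <;> simp <;> ring
  · simp

lemma lift_snd (μ1 μ2 t : ℝ) (z : ℂ) : ∃ c : ℝ, (liftCurve μ1 μ2 t z).2.1 = c * z := by
  have hz : (starRingEnd ℂ) z * z = (Complex.normSq z : ℂ) := by rw [mul_comm, Complex.mul_conj]
  simp only [liftCurve, tau4, conj']
  set D : ℝ := Complex.normSq ((t : ℂ) ^ 3) + Complex.normSq (μ1 * (t : ℂ) ^ 2 * z) +
    Complex.normSq (μ2 * t * z ^ 2) + Complex.normSq (-((μ1 : ℂ) * μ2 / 3) * z ^ 3)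
  refine ⟨2 * (t ^ 3 * (μ1 * t ^ 2) - μ1 * μ2 ^ 2 / 3 * t * Complex.normSq z ^ 2) / D, ?_⟩
  push_cast
  rw [← hz]
  simp only [map_mul, map_pow, Complex.conj_ofReal]
  ring

lemma off_axis_ne_south (x : E3) (hx : x 0 ^ 2 + x 1 ^ 2 ≠ 0) : ‖x‖⁻¹ • x ≠ southPole := by
  intro h
  have hx0 : x ≠ 0 := by rintro rfl; simp at hx
  have hn : ‖x‖ ≠ 0 := norm_ne_zero_iff.2 hx0
  have h0 := congrArg (fun y : E3 => y 0) h
  have h1 := congrArg (fun y : E3 => y 1) h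
  simp [southPole, hn] at h0 h1
  rw [h0, h1] at hx
  simp at hx

lemma tang_Xf (μ1 μ2 : ℝ) (η k : ℝ → ℝ) :
    tangPart (homExt (omegaFam (μ1 : ℂ) (μ2 : ℂ))) (Xf η k) = Xf η k := by
  ext1 x
  by_cases hx : x 0 ^ 2 + x 1 ^ 2 = 0
  · simp [tangPart, Xf_axis _ _ _ hx, vdot]
  · have h : vdot (homExt (omegaFam (μ1 : ℂ) (μ2 : ℂ)) x) (Xf η k x) = 0 := by
      rw [homExt, omegaFam, if_neg (off_axis_ne_south x hx)]
      obtain ⟨c, hc⟩ := lift_snd μ1 μ2 (1 + (‖x‖⁻¹ • x) 2)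
        (((‖x‖⁻¹ • x) 0 : ℂ) + ((‖x‖⁻¹ • x) 1 : ℂ) * Complex.I)
      simp only [vdot, Xf, hc]
      simp
      ring
    rw [tangPart, h, zero_smul, sub_zero]

lemma tau4_contDiffAt {w0 w1 w2 w3 : E3 → ℂ} {x : E3} (h0 : ContDiffAt ℝ (⊤ : ℕ∞) w0 x)
    (h1 : ContDiffAt ℝ (⊤ : ℕ∞) w1 x) (h2 : ContDiffAt ℝ (⊤ : ℕ∞) w2 x)
    (h3 : ContDiffAt ℝ (⊤ : ℕ∞) w3 x) (hw : w0 x ≠ 0) :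
    ContDiffAt ℝ (⊤ : ℕ∞) (fun y => tau4 (w0 y) (w1 y) (w2 y) (w3 y)) x := by
  have hN : ∀ {w : E3 → ℂ}, ContDiffAt ℝ (⊤ : ℕ∞) w x → ContDiffAt ℝ (⊤ : ℕ∞) (fun y => Complex.normSq (w y)) x := by
    intro w hw
    have hre := Complex.reCLM.contDiff.contDiffAt.comp x hw
    have him := Complex.imCLM.contDiff.contDiffAt.comp x hw
    exact (hre.mul hre).add (him.mul him)
  have hC : ∀ {w : E3 → ℂ}, ContDiffAt ℝ (⊤ : ℕ∞) w x → ContDiffAt ℝ (⊤ : ℕ∞) (fun y => conj' (w y)) x := by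
    intro w hw
    exact Complex.conjCLE.contDiff.contDiffAt.comp x hw
  have hD := (((hN h0).add (hN h1)).add (hN h2)).add (hN h3)
  have hD0 : Complex.normSq (w0 x) + Complex.normSq (w1 x) + Complex.normSq (w2 x) + Complex.normSq (w3 x) ≠ 0 := by
    have := Complex.normSq_pos.2 hw
    have a1 := Complex.normSq_nonneg (w1 x)
    have a2 := Complex.normSq_nonneg (w2 x)
    have a3 := Complex.normSq_nonneg (w3 x)
    positivity
  have hDc := Complex.ofRealCLM.contDiff.contDiffAt.comp x hD
  have hDc0 : ((Complex.normSq (w0 x) + Complex.normSq (w1 x) + Complex.normSq (w2 x) + Complex.normSq (w3 x) : ℝ) : ℂ) ≠ 0 :=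
    Complex.ofReal_ne_zero.2 hD0
  refine ContDiffAt.prodMk ?_ (ContDiffAt.prodMk ?_ ?_)
  · exact ((((hN h0).add (hN h3)).sub (hN h1)).sub (hN h2)).div hD hD0
  · simp only [div_eq_mul_inv]
    exact (contDiffAt_const.mul (((hC h0).mul h1).add ((hC h2).mul h3))).mul (hDc.inv hDc0)
  · simp only [div_eq_mul_inv]
    exact (contDiffAt_const.mul (((hC h0).mul h2).sub ((hC h1).mul h3))).mul (hDc.inv hDc0)

open Filter Topology in
lemma w_contDiffAt (μ1 μ2 : ℂ) (x : E3) (hx : x 0 ^ 2 + x 1 ^ 2 ≠ 0) :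
    ContDiffAt ℝ (⊤ : ℕ∞) (homExt (omegaFam μ1 μ2)) x := by
  have hx0 : x ≠ 0 := by rintro rfl; simp at hx
  have hn0 : ‖x‖ ≠ 0 := norm_ne_zero_iff.2 hx0
  have hn : ContDiffAt ℝ (⊤ : ℕ∞) (fun y : E3 => ‖y‖) x := contDiffAt_norm ℝ hx0
  have hc : ∀ i : Fin 3, ContDiffAt ℝ (⊤ : ℕ∞) (fun y : E3 => y i) x := fun i => by fun_prop
  have hnc : ∀ i : Fin 3, ContDiffAt ℝ (⊤ : ℕ∞) (fun y : E3 => (‖y‖⁻¹ • y) i) x := fun i => by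
    have := (hn.inv hn0).mul (hc i)
    simpa using this
  have hev : homExt (omegaFam μ1 μ2) =ᶠ[𝓝 x] fun y => liftCurve μ1 μ2 ((1 + (‖y‖⁻¹ • y) 2 : ℝ) : ℂ)
      (((‖y‖⁻¹ • y) 0 : ℂ) + ((‖y‖⁻¹ • y) 1 : ℂ) * Complex.I) := by
    have hcont : Continuous (fun y : E3 => y 0 ^ 2 + y 1 ^ 2) := by fun_prop
    filter_upwards [hcont.continuousAt.eventually_ne hx] with y hy
    rw [homExt, omegaFam, if_neg (off_axis_ne_south y hy)]
  refine ContDiffAt.congr_of_eventuallyEq ?_ hev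
  have hz0 : ContDiffAt ℝ (⊤ : ℕ∞) (fun y : E3 => ((1 + (‖y‖⁻¹ • y) 2 : ℝ) : ℂ)) x :=
    Complex.ofRealCLM.contDiff.contDiffAt.comp x (contDiffAt_const.add (hnc 2))
  have hz1 : ContDiffAt ℝ (⊤ : ℕ∞) (fun y : E3 => (((‖y‖⁻¹ • y) 0 : ℂ) + ((‖y‖⁻¹ • y) 1 : ℂ) * Complex.I)) x :=
    (Complex.ofRealCLM.contDiff.contDiffAt.comp x (hnc 0)).add
      ((Complex.ofRealCLM.contDiff.contDiffAt.comp x (hnc 1)).mul contDiffAt_const)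
  unfold liftCurve
  apply tau4_contDiffAt
  · exact hz0.pow 3
  · exact (contDiffAt_const.mul (hz0.pow 2)).mul hz1
  · exact (contDiffAt_const.mul hz0).mul (hz1.pow 2)
  · exact contDiffAt_const.mul (hz1.pow 3)
  · apply pow_ne_zero
    rw [Complex.ofReal_ne_zero]
    have hsq := norm_sq_E3 x
    have hpos : 0 < x 0 ^ 2 + x 1 ^ 2 := by positivity
    have hnp : 0 < ‖x‖ := norm_pos_iff.2 hx0
    simp only [PiLp.smul_apply, smul_eq_mul]
    intro h
    field_simp at h
    nlinarith

lemma gradSq_nonneg (f : E3 → V5) (x : E3) : 0 ≤ gradSq f x := by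
  refine Finset.sum_nonneg fun i _ => ?_
  unfold nsq
  have := Complex.normSq_nonneg (fderiv ℝ f x (EuclideanSpace.single i 1)).2.1
  have := Complex.normSq_nonneg (fderiv ℝ f x (EuclideanSpace.single i 1)).2.2
  positivity

lemma nsq_continuous : Continuous nsq := by
  unfold nsq
  have := Complex.continuous_normSq
  fun_prop

lemma gradSq_measurable (f : E3 → V5) : Measurable (gradSq f) := by
  unfold gradSq
  refine Finset.measurable_sum _ fun i _ => ?_
  exact nsq_continuous.measurable.comp (measurable_fderiv_apply_const ℝ f _)

lemma gradSqR_measurable (f : E3 → ℝ) : Measurable (gradSqR f) := by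
  unfold gradSqR
  refine Finset.measurable_sum _ fun i _ => ?_
  exact (measurable_fderiv_apply_const ℝ f _).pow_const 2

lemma nsq_smul (c : ℝ) (p : V5) : nsq (c • p) = c ^ 2 * nsq p := by
  simp [nsq, Complex.normSq_apply]; ring

lemma gradSq_homog (ω : E3 → V5) (r : ℝ) (hr : 0 < r) (y : E3) :
    gradSq (homExt ω) (r • y) = (r ^ 2)⁻¹ * gradSq (homExt ω) y := by
  have h : (fun x => homExt ω (r • x)) = homExt ω := by
    ext1 x
    simp only [homExt, norm_smul, Real.norm_eq_abs, abs_of_pos hr, smul_smul]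
    congr 2
    field_simp
  have h2 : fderiv ℝ (homExt ω) y = r • fderiv ℝ (homExt ω) (r • y) := by
    conv_lhs => rw [← h]
    exact fderiv_comp_smul r
  simp only [gradSq, h2, smul_apply, nsq_smul, ← Finset.mul_sum]
  field_simp

lemma gradSq_w_bound (μ1 μ2 : ℂ) (a : ℝ) (ha : a < 1) :
    ∃ M, ∀ y ∈ sphere2, |y 2| ≤ a → gradSq (homExt (omegaFam μ1 μ2)) y ≤ M := by
  have hK : IsCompact (sphere2 ∩ {y : E3 | |y 2| ≤ a}) := by
    refine (isCompact_sphere _ _).inter_right (isClosed_le ?_ continuous_const)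
    fun_prop
  have hc : ContinuousOn (gradSq (homExt (omegaFam μ1 μ2))) (sphere2 ∩ {y : E3 | |y 2| ≤ a}) := by
    rintro y ⟨hy, hya⟩
    have hy1 : ‖y‖ = 1 := by simpa [sphere2] using hy
    have hoff : y 0 ^ 2 + y 1 ^ 2 ≠ 0 := by
      have := norm_sq_E3 y
      have h2 : y 2 ^ 2 < 1 := by
        rw [sq_lt_one_iff_abs_lt_one]; exact lt_of_le_of_lt hya ha
      rw [hy1] at this
      intro h
      linarith
    apply ContinuousAt.continuousWithinAt
    have := ((w_contDiffAt μ1 μ2 y hoff).of_le (m := 1) (by exact_mod_cast le_top)).continuousAt_fderiv one_ne_zero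
    unfold gradSq
    refine tendsto_finsetSum _ fun i _ => ?_
    exact (nsq_continuous.continuousAt (x := _)).comp (this.clm_apply continuousAt_const)
  obtain ⟨M, hM⟩ := hK.bddAbove_image hc
  exact ⟨M, fun y hy hya => hM ⟨y, ⟨hy, hya⟩, rfl⟩⟩

instance tauM_finite : IsFiniteMeasure tauM := by unfold tauM; infer_instance

lemma tauM_ae : ∀ᵐ y ∂tauM, y ∈ sphere2 := by
  unfold tauM
  rw [ae_map_iff measurable_subtype_coe.aemeasurable]
  · exact Filter.Eventually.of_forall fun y => y.2
  · exact Metric.isClosed_sphere.measurableSet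

/-- The angular integrand. -/
def Jq (W : E3 → ℝ) (k k' : ℝ → ℝ) (y : E3) : ℝ :=
  (1 - y 2 ^ 2) * k' (y 2) ^ 2 + k (y 2) ^ 2 / (1 - y 2 ^ 2) - W y * k (y 2) ^ 2

lemma Jq_bound (W : E3 → ℝ) (a M : ℝ) (ha0 : 0 ≤ a) (ha : a < 1) (hW0 : ∀ y, 0 ≤ W y)
    (hM : ∀ y ∈ sphere2, |y 2| ≤ a → W y ≤ M) (k k' : ℝ → ℝ) (K : ℝ)
    (hk : ∀ s, |k s| ≤ K) (hk' : ∀ s, |k' s| ≤ K) (hk0 : ∀ s, a ≤ |s| → k s = 0) :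
    ∀ y ∈ sphere2, |Jq W k k' y| ≤ K ^ 2 + K ^ 2 / (1 - a ^ 2) + |M| * K ^ 2 := by
  intro y hy
  have hs := (mem_sphere2_iff y).1 hy
  have hK : 0 ≤ K := (abs_nonneg _).trans (hk 0)
  have hk2 : k (y 2) ^ 2 ≤ K ^ 2 := by rw [← sq_abs]; gcongr; exact hk _
  have hk2' : k' (y 2) ^ 2 ≤ K ^ 2 := by rw [← sq_abs]; gcongr; exact hk' _
  have h1 : 0 ≤ 1 - y 2 ^ 2 := by nlinarith [sq_nonneg (y 0), sq_nonneg (y 1)]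
  have t1 : (1 - y 2 ^ 2) * k' (y 2) ^ 2 ≤ K ^ 2 := by
    nlinarith [mul_nonneg (sq_nonneg (y 2)) (sq_nonneg (k' (y 2)))]
  have t1' : 0 ≤ (1 - y 2 ^ 2) * k' (y 2) ^ 2 := by positivity
  unfold Jq
  by_cases hya : a ≤ |y 2|
  · rw [hk0 _ hya]
    simp only [ne_eq, OfNat.ofNat_ne_zero, not_false_eq_true, zero_pow, zero_div, add_zero, mul_zero, sub_zero]
    rw [abs_of_nonneg t1']
    have : 0 < 1 - a ^ 2 := by nlinarith
    have : 0 ≤ K ^ 2 / (1 - a ^ 2) + |M| * K ^ 2 := by positivity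
    linarith
  · push Not at hya
    have hlt : y 2 ^ 2 ≤ a ^ 2 := by rw [← sq_abs]; gcongr
    have hpos : 0 < 1 - a ^ 2 := by nlinarith
    have t2 : k (y 2) ^ 2 / (1 - y 2 ^ 2) ≤ K ^ 2 / (1 - a ^ 2) := by gcongr
    have t2' : 0 ≤ k (y 2) ^ 2 / (1 - y 2 ^ 2) := by positivity
    have t3 : W y * k (y 2) ^ 2 ≤ |M| * K ^ 2 := by
      gcongr
      exact (hM y hy hya.le).trans (le_abs_self _)
    have t3' : 0 ≤ W y * k (y 2) ^ 2 := mul_nonneg (hW0 y) (sq_nonneg _)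
    rw [abs_le]
    constructor <;> linarith

lemma Jq_integrable (W : E3 → ℝ) (a M : ℝ) (ha0 : 0 ≤ a) (ha : a < 1) (hW0 : ∀ y, 0 ≤ W y)
    (hWm : Measurable W)
    (hM : ∀ y ∈ sphere2, |y 2| ≤ a → W y ≤ M) (k k' : ℝ → ℝ) (K : ℝ)
    (hkm : Measurable k) (hkm' : Measurable k')
    (hk : ∀ s, |k s| ≤ K) (hk' : ∀ s, |k' s| ≤ K) (hk0 : ∀ s, a ≤ |s| → k s = 0) :
    Integrable (Jq W k k') tauM := by
  refine Integrable.of_bound (C := K ^ 2 + K ^ 2 / (1 - a ^ 2) + |M| * K ^ 2) ?_ ?_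
  · apply Measurable.aestronglyMeasurable
    unfold Jq
    have h2 : Measurable (fun y : E3 => y 2) := by fun_prop
    have := hkm.comp h2
    have := hkm'.comp h2
    fun_prop
  · filter_upwards [tauM_ae] with y hy
    exact Jq_bound W a M ha0 ha hW0 hM k k' K hk hk' hk0 y hy

lemma ksq_integrable (k : ℝ → ℝ) (K : ℝ) (hkm : Measurable k) (hk : ∀ s, |k s| ≤ K) :
    Integrable (fun y : E3 => k (y 2) ^ 2) tauM := by
  refine Integrable.of_bound (C := K ^ 2) ?_ ?_
  · apply Measurable.aestronglyMeasurable
    have h2 : Measurable (fun y : E3 => y 2) := by fun_prop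
    exact (hkm.comp h2).pow_const 2
  · refine Filter.Eventually.of_forall fun y => ?_
    rw [Real.norm_eq_abs, abs_pow]
    gcongr
    exact hk _

/-- Bounds for compactly supported `C¹` profiles. -/
lemma profile_bound (k : ℝ → ℝ) (a : ℝ) (hk : ContDiff ℝ 1 k) (hk0 : ∀ s, a ≤ |s| → k s = 0) :
    ∃ K, (∀ s, |k s| ≤ K) ∧ (∀ s, |deriv k s| ≤ K) := by
  have hc : HasCompactSupport k := by
    apply HasCompactSupport.of_support_subset_isCompact (isCompact_Icc (a := -a) (b := a))
    intro s hs
    by_contra h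
    apply hs
    apply hk0
    by_contra h'
    push Not at h'
    exact h ⟨(abs_lt.1 h').1.le, (abs_lt.1 h').2.le⟩
  obtain ⟨K1, h1⟩ := hc.exists_bound_of_continuous hk.continuous
  obtain ⟨K2, h2⟩ := hc.deriv.exists_bound_of_continuous (hk.continuous_deriv le_rfl)
  exact ⟨max K1 K2, fun s => (h1 s).trans (le_max_left _ _), fun s => (h2 s).trans (le_max_right _ _)⟩

open Set Filter Topology in
/-- The angular inequality for smooth profiles. -/
lemma main1 (μ1 μ2 : ℝ) (hstab : IsStable (homExt (omegaFam (μ1 : ℂ) (μ2 : ℂ))))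
    (k : ℝ → ℝ) (a : ℝ) (ha0 : 0 ≤ a) (ha : a < 1) (hk : ContDiff ℝ (⊤ : ℕ∞) k)
    (hk0 : ∀ s, a ≤ |s| → k s = 0) :
    0 ≤ 1 / 4 * ∫ y, k (y 2) ^ 2 ∂tauM +
      ∫ y, Jq (gradSq (homExt (omegaFam (μ1 : ℂ) (μ2 : ℂ)))) k (deriv k) y ∂tauM := by
  obtain ⟨M, hM⟩ := gradSq_w_bound (μ1 : ℂ) (μ2 : ℂ) a ha
  set W := gradSq (homExt (omegaFam (μ1 : ℂ) (μ2 : ℂ))) with hW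
  have hW0 : ∀ y, 0 ≤ W y := gradSq_nonneg _
  have hk1 : ContDiff ℝ 1 k := hk.of_le (by exact_mod_cast le_top)
  obtain ⟨K, hK, hK'⟩ := profile_bound k a hk1 hk0
  have hp := ksq_integrable k K hk1.continuous.measurable hK
  have hq := Jq_integrable W a M ha0 ha hW0 (gradSq_measurable _) hM k (deriv k) K hk1.continuous.measurable
    (measurable_deriv k) hK hK' hk0
  refine le_of_forall_pos_le_add fun ε hε => ?_
  set P := ∫ y, k (y 2) ^ 2 ∂tauM with hP
  set Q := ∫ y, Jq W k (deriv k) y ∂tauM with hQ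
  have hP0 : 0 ≤ P := integral_nonneg fun y => sq_nonneg _
  obtain ⟨η, δ, R, hδ, hη, hη0, hηR, hi1, hi2, hBpos, hle⟩ := exists_eta (ε / (P + 1)) (by positivity)
  have hst := hstab (Xf η k) (Xf_contDiff η k δ a hδ ha hη hk hη0 hk0) (Xf_compact η k R hηR) (Xf_equiv η k)
  rw [secondVar, tang_Xf] at hst
  have hev : (fun r => r ^ 2 * (η r ^ 2 / r ^ 2)) =ᵐ[volume.restrict (Ioi (0:ℝ))] fun r => η r ^ 2 := by
    filter_upwards [ae_restrict_mem measurableSet_Ioi] with r hr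
    have : r ≠ 0 := ne_of_gt hr
    field_simp
  have hpol := polar_sep (fun x => gradSq (Xf η k) x - gradSq (homExt (omegaFam (μ1 : ℂ) (μ2 : ℂ))) x * nsq (Xf η k x))
    (fun y => k (y 2) ^ 2) (Jq W k (deriv k)) (fun r => deriv η r ^ 2) (fun r => η r ^ 2 / r ^ 2) ?_ hi1
    ((integrable_congr hev).2 hi2) hp hq
  · rw [hpol, integral_congr_ae hev] at hst
    set A := ∫ r in Ioi (0:ℝ), r ^ 2 * deriv η r ^ 2
    set B := ∫ r in Ioi (0:ℝ), η r ^ 2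
    have h3 : A * P ≤ (1 / 4 + ε / (P + 1)) * B * P := by gcongr
    have h4 : 0 ≤ B * ((1 / 4 + ε / (P + 1)) * P + Q) := by
      have : A * P + B * Q ≤ B * ((1 / 4 + ε / (P + 1)) * P + Q) := by linarith
      exact hst.trans this
    have h5 := nonneg_of_mul_nonneg_right h4 hBpos
    have h6 : ε / (P + 1) * P ≤ ε := by
      rw [div_mul_eq_mul_div, div_le_iff₀ (by positivity)]
      nlinarith
    linarith
  · intro r hr y hy
    have hy1 : ‖y‖ = 1 := by simpa [sphere2] using hy
    have hs := (mem_sphere2_iff y).1 hy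
    have hnr : ‖r • y‖ = r := by rw [norm_smul, hy1, mul_one, Real.norm_eq_abs, abs_of_pos hr]
    have hco : ∀ i : Fin 3, (r • y) i = r * y i := fun i => by simp
    have hsq : (r • y) 0 ^ 2 + (r • y) 1 ^ 2 = r ^ 2 * (1 - y 2 ^ 2) := by
      rw [hco, hco, ← hs]; ring
    have hquot : (r • y) 2 / ‖r • y‖ = y 2 := by
      rw [hco, hnr]; field_simp
    by_cases hax : 1 - y 2 ^ 2 = 0
    · have hX := Xf_eventually η k δ a hδ ha hη0 hk0 (r • y) (by rw [hsq, hax, mul_zero])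
      have h1 : gradSq (Xf η k) (r • y) = 0 := by
        rw [gradSq, hX.fderiv_eq]
        simp [nsq]
      have hk00 : k (y 2) = 0 := by
        apply hk0
        have : |y 2| = 1 := by
          rw [← sq_eq_sq₀ (abs_nonneg _) zero_le_one, sq_abs]; linarith
        rw [this]; exact ha.le
      show gradSq (Xf η k) (r • y) - _ * nsq (Xf η k (r • y)) = _
      rw [h1, hX.eq_of_nhds, Jq, hax, hk00]
      simp [nsq]
    · have hne : (r • y) 0 ^ 2 + (r • y) 1 ^ 2 ≠ 0 := by
        rw [hsq]; positivity
      have hgr := gradSq_Xf η k (r • y) hne (deriv η r) (deriv k (y 2))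
        (by rw [hnr]; exact ((hη r hr).differentiableAt (by simp)).hasDerivAt)
        (by rw [hquot]; exact (hk1.differentiable (by simp) _).hasDerivAt)
      show gradSq (Xf η k) (r • y) - _ * nsq (Xf η k (r • y)) = _
      rw [hgr, nsq_Xf _ _ _ hne, gradSq_homog _ _ hr, ← hW, Jq, uf, hsq, hquot, hnr]
      field_simp
      ring

lemma profile_compact (k : ℝ → ℝ) (a : ℝ) (hk0 : ∀ s, a ≤ |s| → k s = 0) : HasCompactSupport k := by
  apply HasCompactSupport.of_support_subset_isCompact (isCompact_Icc (a := -a) (b := a))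
  intro s hs
  by_contra h
  apply hs
  apply hk0
  by_contra h'
  push Not at h'
  exact h ⟨(abs_lt.1 h').1.le, (abs_lt.1 h').2.le⟩

open Set Filter Topology in
/-- Smooth approximation of `C¹` profiles. -/
lemma mollify (k : ℝ → ℝ) (a : ℝ) (ha : a < 1) (hk : ContDiff ℝ 1 k)
    (hk0 : ∀ s, a ≤ |s| → k s = 0) (K : ℝ) (hK : ∀ s, |k s| ≤ K) (hK' : ∀ s, |deriv k s| ≤ K) :
    ∃ kn : ℕ → ℝ → ℝ, (∀ n, ContDiff ℝ (⊤ : ℕ∞) (kn n)) ∧ (∀ n s, (1 + a) / 2 ≤ |s| → kn n s = 0) ∧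
      (∀ n s, |kn n s| ≤ 3 * K) ∧ (∀ n s, |deriv (kn n) s| ≤ 3 * K) ∧
      (∀ s, Tendsto (fun n => kn n s) atTop (𝓝 (k s))) ∧
      (∀ s, Tendsto (fun n => deriv (kn n) s) atTop (𝓝 (deriv k s))) := by
  have h1a : 0 < 1 - a := by linarith
  let φ : ℕ → ContDiffBump (0 : ℝ) := fun n =>
    ⟨(1 - a) / 4 * (1 / ((n : ℝ) + 1)), (1 - a) / 2 * (1 / ((n : ℝ) + 1)), by positivity, by gcongr; norm_num⟩
  have hφ : ∀ n, (φ n).rOut = (1 - a) / 2 * (1 / ((n : ℝ) + 1)) := fun n => rfl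
  have hφt : Tendsto (fun n => (φ n).rOut) atTop (𝓝 0) := by
    have := (tendsto_one_div_add_atTop_nhds_zero_nat (𝕜 := ℝ)).const_mul ((1 - a) / 2)
    simpa only [hφ, mul_zero] using this
  have hφle : ∀ n, (φ n).rOut ≤ (1 - a) / 2 := fun n => by
    rw [hφ]
    have : 1 / ((n : ℝ) + 1) ≤ 1 := by
      rw [div_le_one (by positivity)]
      have : (0 : ℝ) ≤ n := Nat.cast_nonneg n
      linarith
    nlinarith
  have hcs := profile_compact k a hk0
  have hdc : Continuous (deriv k) := hk.continuous_deriv le_rfl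
  have hder : ∀ n s, deriv (convolution ((φ n).normed volume) k (ContinuousLinearMap.lsmul ℝ ℝ) volume) s =
      convolution ((φ n).normed volume) (deriv k) (ContinuousLinearMap.lsmul ℝ ℝ) volume s := by
    intro n s
    refine (HasCompactSupport.hasDerivAt_convolution_right _ ?_ hcs hk s).deriv
    exact ((φ n).continuous_normed).locallyIntegrable
  have hbd : ∀ (f : ℝ → ℝ), Continuous f → (∀ s, |f s| ≤ K) → ∀ n s,
      |convolution ((φ n).normed volume) f (ContinuousLinearMap.lsmul ℝ ℝ) volume s| ≤ 3 * K := by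
    intro f hf hb n s
    have h := ContDiffBump.dist_normed_convolution_le (φ := φ n) (μ := volume) (x₀ := s) (ε := 2 * K)
      hf.aestronglyMeasurable (fun x _ => by
        rw [Real.dist_eq]
        have := abs_sub (f x) (f s)
        linarith [hb x, hb s])
    rw [Real.dist_eq] at h
    have h2 := hb s
    rw [abs_le] at *
    constructor <;> linarith
  refine ⟨fun n => convolution ((φ n).normed volume) k (ContinuousLinearMap.lsmul ℝ ℝ) volume, ?_, ?_, ?_, ?_, ?_, ?_⟩
  · intro n
    exact HasCompactSupport.contDiff_convolution_left _ (φ n).hasCompactSupport_normed (φ n).contDiff_normed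
      hk.continuous.locallyIntegrable
  · intro n s hs
    have hks : k s = 0 := hk0 s (by linarith)
    have h := ContDiffBump.dist_normed_convolution_le (φ := φ n) (μ := volume) (x₀ := s) (ε := 0)
      hk.continuous.aestronglyMeasurable (fun x hx => by
        rw [hks, hk0 x, dist_self]
        rw [Metric.mem_ball, Real.dist_eq] at hx
        have h3 := hφle n
        have h4 := abs_sub_abs_le_abs_sub s x
        rw [abs_sub_comm] at h4
        linarith)
    rw [hks] at h
    exact dist_le_zero.1 h
  · exact hbd k hk.continuous hK
  · intro n s
    rw [hder]
    exact hbd _ hdc hK' n s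
  · intro s
    exact ContDiffBump.convolution_tendsto_right_of_continuous hφt hk.continuous s
  · intro s
    simp only [hder]
    exact ContDiffBump.convolution_tendsto_right_of_continuous hφt hdc s

open Set Filter Topology in
/-- The angular inequality for `C¹` profiles. -/
lemma main2 (μ1 μ2 : ℝ) (hstab : IsStable (homExt (omegaFam (μ1 : ℂ) (μ2 : ℂ))))
    (k : ℝ → ℝ) (a : ℝ) (ha0 : 0 ≤ a) (ha : a < 1) (hk : ContDiff ℝ 1 k)
    (hk0 : ∀ s, a ≤ |s| → k s = 0) :
    0 ≤ 1 / 4 * ∫ y, k (y 2) ^ 2 ∂tauM +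
      ∫ y, Jq (gradSq (homExt (omegaFam (μ1 : ℂ) (μ2 : ℂ)))) k (deriv k) y ∂tauM := by
  obtain ⟨K, hK, hK'⟩ := profile_bound k a hk hk0
  obtain ⟨kn, h1, h2, h3, h4, h5, h6⟩ := mollify k a ha hk hk0 K hK hK'
  have hb0 : 0 ≤ (1 + a) / 2 := by linarith
  have hb : (1 + a) / 2 < 1 := by linarith
  obtain ⟨M, hM⟩ := gradSq_w_bound (μ1 : ℂ) (μ2 : ℂ) _ hb
  have hmain := fun n => main1 μ1 μ2 hstab (kn n) _ hb0 hb (h1 n) (h2 n)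
  set W := gradSq (homExt (omegaFam (μ1 : ℂ) (μ2 : ℂ))) with hW
  have hWm : Measurable W := gradSq_measurable _
  refine ge_of_tendsto' (x := atTop) ?_ hmain
  have hc2 : Measurable (fun y : E3 => y 2) := by fun_prop
  refine Tendsto.add (Tendsto.const_mul _ ?_) ?_
  · refine tendsto_integral_of_dominated_convergence (fun _ => (3 * K) ^ 2) (fun n => ?_) (integrable_const _)
      (fun n => ?_) ?_
    · exact (((h1 n).continuous.measurable.comp hc2).pow_const 2).aestronglyMeasurable
    · refine Filter.Eventually.of_forall fun y => ?_
      rw [Real.norm_eq_abs, abs_pow]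
      gcongr
      exact h3 _ _
    · exact Filter.Eventually.of_forall fun y => (h5 _).pow 2
  · refine tendsto_integral_of_dominated_convergence
      (fun _ => (3 * K) ^ 2 + (3 * K) ^ 2 / (1 - ((1 + a) / 2) ^ 2) + |M| * (3 * K) ^ 2) (fun n => ?_)
      (integrable_const _) (fun n => ?_) ?_
    · exact (Jq_integrable W _ M hb0 hb (gradSq_nonneg _) hWm hM (kn n) _ (3 * K) (h1 n).continuous.measurable
        (measurable_deriv _) (h3 n) (h4 n) (h2 n)).1
    · filter_upwards [tauM_ae] with y hy
      exact Jq_bound W _ M hb0 hb (gradSq_nonneg _) hM (kn n) _ (3 * K) (h3 n) (h4 n) (h2 n) y hy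
    · refine Filter.Eventually.of_forall fun y => ?_
      unfold Jq
      exact ((((h6 _).pow 2).const_mul _).add (((h5 _).pow 2).div_const _)).sub (((h5 _).pow 2).const_mul _)

open Set Filter Topology in
/-- Truncation near zero. -/
lemma trunc : ∃ φ : ℕ → ℝ → ℝ, (∀ n, ContDiff ℝ 1 (φ n)) ∧ (∀ n s, |φ n s| ≤ |s|) ∧
    (∀ n s, |deriv (φ n) s| ≤ 1) ∧ (∀ n, ∃ ε > 0, ∀ s, |s| ≤ ε → φ n s = 0) ∧
    ∀ s, Tendsto (fun n => φ n s) atTop (𝓝 s) := by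
  let q : ℕ → ℝ → ℝ := fun n t => max 0 (min 1 (((n : ℝ) + 1) * |t| - 1))
  have hqc : ∀ n, Continuous (q n) := fun n => by fun_prop
  have hq0 : ∀ n t, 0 ≤ q n t := fun n t => le_max_left _ _
  have hq1 : ∀ n t, q n t ≤ 1 := fun n t => max_le zero_le_one (min_le_left _ _)
  have hqa : ∀ n t, ‖q n t‖ ≤ 1 := fun n t => by
    rw [Real.norm_eq_abs, abs_of_nonneg (hq0 n t)]; exact hq1 n t
  have hder : ∀ n s, HasDerivAt (fun s => ∫ t in (0 : ℝ)..s, q n t) (q n s) s := fun n s =>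
    (hqc n).integral_hasStrictDerivAt 0 s |>.hasDerivAt
  have hd : ∀ n, deriv (fun s => ∫ t in (0 : ℝ)..s, q n t) = q n := fun n => funext fun s => (hder n s).deriv
  refine ⟨fun n s => ∫ t in (0 : ℝ)..s, q n t, ?_, ?_, ?_, ?_, ?_⟩
  · intro n
    rw [contDiff_one_iff_deriv, hd]
    exact ⟨fun s => (hder n s).differentiableAt, hqc n⟩
  · intro n s
    have := intervalIntegral.norm_integral_le_of_norm_le_const (f := q n) (a := 0) (b := s) (C := 1)
      (fun t _ => hqa n t)
    simpa using this
  · intro n s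
    rw [hd]
    exact hqa n s
  · intro n
    have hn : (0 : ℝ) < (n : ℝ) + 1 := by positivity
    refine ⟨1 / ((n : ℝ) + 1), by positivity, fun s hs => ?_⟩
    have : ∀ t ∈ uIcc 0 s, q n t = 0 := by
      intro t ht
      have h1 : |t| ≤ |s| := by simpa using abs_sub_left_of_mem_uIcc ht
      have h2 : ((n : ℝ) + 1) * |t| ≤ 1 := by
        have := h1.trans hs
        rw [le_div_iff₀ hn] at this
        linarith
      apply max_eq_left
      exact (min_le_right _ _).trans (by linarith)
    show ∫ t in (0 : ℝ)..s, q n t = 0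
    rw [intervalIntegral.integral_congr (g := fun _ => 0) this]
    simp
  · intro s
    have h := intervalIntegral.tendsto_integral_filter_of_dominated_convergence (μ := volume) (a := 0) (b := s)
      (l := atTop) (F := q) (f := fun _ => 1) (fun _ => (1 : ℝ))
      (Eventually.of_forall fun n => (hqc n).aestronglyMeasurable)
      (Eventually.of_forall fun n => Eventually.of_forall fun t _ => hqa n t) (by simp) ?_
    · simpa using h
    · have : ∀ᵐ t : ℝ, t ≠ 0 := by
        rw [ae_iff]; simp
      filter_upwards [this] with t ht _
      have h0 : 0 < |t| := abs_pos.2 ht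
      obtain ⟨N, hN⟩ := exists_nat_gt (2 / |t|)
      refine tendsto_const_nhds.congr' ?_
      filter_upwards [eventually_ge_atTop N] with n hn
      have h1 : (N : ℝ) ≤ n := by exact_mod_cast hn
      rw [div_lt_iff₀ h0] at hN
      have h2 : 1 ≤ ((n : ℝ) + 1) * |t| - 1 := by nlinarith
      show 1 = max 0 (min 1 (((n : ℝ) + 1) * |t| - 1))
      rw [min_eq_left h2, max_eq_right zero_le_one]

/-- The angular inequality for `C¹` profiles, with respect to the surface measure. -/
lemma main3 (μ1 μ2 : ℝ) (hstab : IsStable (homExt (omegaFam (μ1 : ℂ) (μ2 : ℂ))))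
    (k : ℝ → ℝ) (a : ℝ) (ha0 : 0 ≤ a) (ha : a < 1) (hk : ContDiff ℝ 1 k)
    (hk0 : ∀ s, a ≤ |s| → k s = 0) :
    Integrable (fun y : E3 => k (y 2) ^ 2 * gradSq (homExt (omegaFam (μ1 : ℂ) (μ2 : ℂ))) y)
      (surf.restrict sphere2) ∧
    Integrable (fun y : E3 => 1 / 4 * k (y 2) ^ 2 + Jq (fun _ => 0) k (deriv k) y) (surf.restrict sphere2) ∧
    ∫ y, k (y 2) ^ 2 * gradSq (homExt (omegaFam (μ1 : ℂ) (μ2 : ℂ))) y ∂(surf.restrict sphere2) ≤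
      ∫ y, (1 / 4 * k (y 2) ^ 2 + Jq (fun _ => 0) k (deriv k) y) ∂(surf.restrict sphere2) := by
  have hmain := main2 μ1 μ2 hstab k a ha0 ha hk hk0
  obtain ⟨M, hM⟩ := gradSq_w_bound (μ1 : ℂ) (μ2 : ℂ) a ha
  set W := gradSq (homExt (omegaFam (μ1 : ℂ) (μ2 : ℂ))) with hW
  obtain ⟨K, hK, hK'⟩ := profile_bound k a hk hk0
  have hp := ksq_integrable k K hk.continuous.measurable hK
  have hq := Jq_integrable W a M ha0 ha (gradSq_nonneg _) (gradSq_measurable _) hM k (deriv k) K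
    hk.continuous.measurable (measurable_deriv k) hK hK' hk0
  have hz := Jq_integrable (fun _ => 0) a 0 ha0 ha (fun _ => le_rfl) measurable_const (fun _ _ _ => le_rfl)
    k (deriv k) K hk.continuous.measurable (measurable_deriv k) hK hK' hk0
  have he : ∀ y, k (y 2) ^ 2 * W y = Jq (fun _ => 0) k (deriv k) y - Jq W k (deriv k) y := by
    intro y; unfold Jq; ring
  have hi1 : Integrable (fun y : E3 => k (y 2) ^ 2 * W y) tauM := by
    simp only [he]; exact hz.sub hq
  have hi2 : Integrable (fun y : E3 => 1 / 4 * k (y 2) ^ 2 + Jq (fun _ => 0) k (deriv k) y) tauM :=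
    (hp.const_mul _).add hz
  obtain ⟨c, hc⟩ := surf_eq
  rw [hc]
  refine ⟨hi1.smul_measure_nnreal, hi2.smul_measure_nnreal, ?_⟩
  rw [integral_smul_nnreal_measure, integral_smul_nnreal_measure]
  refine smul_le_smul_of_nonneg_left ?_ bot_le
  simp only [he]
  rw [integral_sub hz hq, integral_add (hp.const_mul _) hz, integral_const_mul]
  linarith

/-- The profile of an invariant function on the sphere. -/
def hprof (g : E3 → ℝ) (s : ℝ) : ℝ := homExtR g (sph (Real.arccos s))

lemma homExtR_sphere (g : E3 → ℝ) (y : E3) (hy : y ∈ sphere2) : homExtR g y = g y := by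
  have hy1 : ‖y‖ = 1 := by simpa [sphere2] using hy
  simp [homExtR, hy1]

lemma g_eq_hprof (g : E3 → ℝ) (hinv : ∀ α : ℝ, ∀ y ∈ sphere2, g (rot3 α y) = g y) (y : E3)
    (hy : y ∈ sphere2) : g y = hprof g (y 2) := by
  obtain ⟨α, -, h⟩ := exists_sph y hy
  rw [hprof, homExtR_sphere _ _ (sph_mem _)]
  conv_lhs => rw [h]
  exact hinv _ _ (sph_mem _)

lemma homExtR_eq_uf (g : E3 → ℝ) (hinv : ∀ α : ℝ, ∀ y ∈ sphere2, g (rot3 α y) = g y) (x : E3)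
    (hx : x ≠ 0) : homExtR g x = uf (fun _ => 1) (hprof g) x := by
  have hn : ‖x‖ ≠ 0 := norm_ne_zero_iff.2 hx
  rw [homExtR, g_eq_hprof g hinv, uf]
  · simp [div_eq_inv_mul]
  · simp [sphere2, norm_smul, hn]

lemma sph_contDiff : ContDiff ℝ 1 sph := by
  rw [contDiff_euclidean]
  intro i
  fin_cases i <;> simp [sph] <;> fun_prop

lemma sph_ne (θ : ℝ) : sph θ ≠ 0 := by
  intro h
  have := sph_mem θ
  rw [h] at this
  simp [sphere2] at this

lemma H_contDiff (g : E3 → ℝ) (hg : ContDiffOn ℝ 1 (homExtR g) {(0 : E3)}ᶜ) :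
    ContDiff ℝ 1 (fun θ => homExtR g (sph θ)) := by
  rw [contDiff_iff_contDiffAt]
  intro θ
  exact (hg.contDiffAt (isOpen_compl_singleton.mem_nhds (sph_ne θ))).comp θ sph_contDiff.contDiffAt

lemma hprof_cont (g : E3 → ℝ) (hg : ContDiffOn ℝ 1 (homExtR g) {(0 : E3)}ᶜ) : Continuous (hprof g) :=
  (H_contDiff g hg).continuous.comp Real.continuous_arccos

lemma H_zero (g : E3 → ℝ) (hN : g northPole = 0) : homExtR g (sph 0) = 0 := by
  rw [homExtR_sphere _ _ (sph_mem _), show sph 0 = northPole by ext i; simp [sph, northPole], hN]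

lemma H_pi (g : E3 → ℝ) (hS : g southPole = 0) : homExtR g (sph Real.pi) = 0 := by
  rw [homExtR_sphere _ _ (sph_mem _), show sph Real.pi = southPole by ext i; fin_cases i <;> simp [sph, southPole], hS]

lemma hprof_zero (g : E3 → ℝ) (hN : g northPole = 0) (hS : g southPole = 0) (s : ℝ) (hs : 1 ≤ |s|) :
    hprof g s = 0 := by
  rcases le_abs.1 hs with h | h
  · rw [hprof, Real.arccos_eq_zero.2 h, H_zero g hN]
  · rw [hprof, Real.arccos_eq_pi.2 (by linarith), H_pi g hS]

lemma hprof_contDiffAt (g : E3 → ℝ) (hg : ContDiffOn ℝ 1 (homExtR g) {(0 : E3)}ᶜ) (s : ℝ) (hs : |s| < 1) :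
    ContDiffAt ℝ 1 (hprof g) s := by
  have h1 := abs_lt.1 hs
  exact (H_contDiff g hg).contDiffAt.comp s (Real.contDiffAt_arccos (by linarith) (by linarith))

lemma gradSqR_eq (g : E3 → ℝ) (hg : ContDiffOn ℝ 1 (homExtR g) {(0 : E3)}ᶜ)
    (hinv : ∀ α : ℝ, ∀ y ∈ sphere2, g (rot3 α y) = g y) (y : E3) (hy : y ∈ sphere2) (hs : |y 2| < 1) :
    gradSqR (homExtR g) y = (1 - y 2 ^ 2) * deriv (hprof g) (y 2) ^ 2 := by
  have hy1 : ‖y‖ = 1 := by simpa [sphere2] using hy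
  have hy0 : y ≠ 0 := by rintro rfl; simp at hy1
  have hd : HasDerivAt (hprof g) (deriv (hprof g) (y 2)) (y 2 / ‖y‖) := by
    rw [hy1, div_one]
    exact ((hprof_contDiffAt g hg _ hs).differentiableAt one_ne_zero).hasDerivAt
  obtain ⟨U, hU, hsum⟩ := uf_deriv (fun _ => 1) (hprof g) y hy0 0 _ (hasDerivAt_const _ _) hd
  have hev : homExtR g =ᶠ[nhds y] uf (fun _ => 1) (hprof g) := by
    filter_upwards [isOpen_compl_singleton.mem_nhds (show y ∈ ({0}ᶜ : Set E3) from hy0)] with x hx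
    exact homExtR_eq_uf g hinv x hx
  rw [gradSqR, (hU.congr_of_eventuallyEq hev).fderiv, hsum, hy1]
  simp
  ring

lemma gradSqR_nonneg (f : E3 → ℝ) (x : E3) : 0 ≤ gradSqR f x :=
  Finset.sum_nonneg fun _ _ => sq_nonneg _

lemma gradSqR_bound (g : E3 → ℝ) (hg : ContDiffOn ℝ 1 (homExtR g) {(0 : E3)}ᶜ) :
    ∃ M, ∀ y ∈ sphere2, gradSqR (homExtR g) y ≤ M := by
  have hc : ContinuousOn (gradSqR (homExtR g)) sphere2 := by
    intro y hy
    have hy1 : ‖y‖ = 1 := by simpa [sphere2] using hy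
    have hy0 : y ≠ 0 := by rintro rfl; simp at hy1
    apply ContinuousAt.continuousWithinAt
    have := (hg.contDiffAt (isOpen_compl_singleton.mem_nhds hy0)).continuousAt_fderiv one_ne_zero
    unfold gradSqR
    refine tendsto_finsetSum _ fun i _ => ?_
    exact (this.clm_apply continuousAt_const).pow 2
  obtain ⟨M, hM⟩ := (isCompact_sphere (0 : E3) 1).bddAbove_image hc
  exact ⟨M, fun y hy => hM ⟨y, hy, rfl⟩⟩

lemma hprof_sq_bound (g : E3 → ℝ) (hg : ContDiffOn ℝ 1 (homExtR g) {(0 : E3)}ᶜ)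
    (hN : g northPole = 0) (hS : g southPole = 0) :
    ∃ C, ∀ s, |s| ≤ 1 → hprof g s ^ 2 ≤ C * (1 - s ^ 2) := by
  set H : ℝ → ℝ := fun θ => homExtR g (sph θ) with hH
  have hHc : ContDiff ℝ 1 H := H_contDiff g hg
  obtain ⟨B, hB⟩ := (isCompact_Icc (a := 0) (b := Real.pi)).exists_bound_of_continuousOn
    (hHc.continuous_deriv le_rfl).continuousOn
  have hlip : ∀ x ∈ Set.Icc 0 Real.pi, ∀ y ∈ Set.Icc 0 Real.pi, |H y - H x| ≤ B * |y - x| := by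
    intro x hx y hy
    exact (convex_Icc _ _).norm_image_sub_le_of_norm_deriv_le
      (fun z _ => hHc.differentiable one_ne_zero z) hB hx hy
  have hpi := Real.pi_pos
  have hB0 : 0 ≤ B := (norm_nonneg _).trans (hB 0 ⟨le_rfl, hpi.le⟩)
  have h0 : H 0 = 0 := H_zero g hN
  have h1 : H Real.pi = 0 := H_pi g hS
  have hkey : ∀ θ ∈ Set.Icc 0 Real.pi, |H θ| ≤ B * (Real.pi / 2) * Real.sin θ := by
    intro θ hθ
    by_cases hle : θ ≤ Real.pi / 2
    · have h := hlip 0 ⟨le_rfl, hpi.le⟩ θ hθ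
      rw [h0, sub_zero, sub_zero, abs_of_nonneg hθ.1] at h
      have h2 := Real.mul_le_sin hθ.1 hle
      have h3 : θ ≤ Real.pi / 2 * Real.sin θ := by
        have := mul_le_mul_of_nonneg_left h2 (show 0 ≤ Real.pi / 2 by positivity)
        field_simp at this ⊢
        linarith
      calc |H θ| ≤ B * θ := h
        _ ≤ B * (Real.pi / 2 * Real.sin θ) := by gcongr
        _ = _ := by ring
    · push Not at hle
      have h := hlip Real.pi ⟨hpi.le, le_rfl⟩ θ hθ
      rw [h1, sub_zero, abs_sub_comm, abs_of_nonneg (show 0 ≤ Real.pi - θ by linarith [hθ.2])] at h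
      have h2 := Real.mul_le_sin (x := Real.pi - θ) (by linarith [hθ.2]) (by linarith)
      rw [Real.sin_pi_sub] at h2
      have h3 : Real.pi - θ ≤ Real.pi / 2 * Real.sin θ := by
        have := mul_le_mul_of_nonneg_left h2 (show 0 ≤ Real.pi / 2 by positivity)
        field_simp at this ⊢
        linarith
      calc |H θ| ≤ B * (Real.pi - θ) := h
        _ ≤ B * (Real.pi / 2 * Real.sin θ) := by gcongr
        _ = _ := by ring
  refine ⟨(B * (Real.pi / 2)) ^ 2, fun s hs => ?_⟩
  have h := hkey (Real.arccos s) ⟨Real.arccos_nonneg s, Real.arccos_le_pi s⟩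
  have hs2 : 0 ≤ 1 - s ^ 2 := by nlinarith [abs_nonneg s, sq_abs s]
  rw [Real.sin_arccos] at h
  calc hprof g s ^ 2 = |H (Real.arccos s)| ^ 2 := by rw [sq_abs, hprof]
    _ ≤ (B * (Real.pi / 2) * Real.sqrt (1 - s ^ 2)) ^ 2 := by gcongr
    _ = _ := by rw [mul_pow _ (Real.sqrt _), Real.sq_sqrt hs2]

open Filter Topology in
/-- Truncated profiles are `C¹` and vanish near the poles. -/
lemma trunc_prof (h φ : ℝ → ℝ) (hc : Continuous h) (hd : ∀ s, |s| < 1 → ContDiffAt ℝ 1 h s)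
    (h0 : ∀ s, 1 ≤ |s| → h s = 0) (hφ : ContDiff ℝ 1 φ) (ε : ℝ) (hε : 0 < ε)
    (hφ0 : ∀ s, |s| ≤ ε → φ s = 0) :
    ContDiff ℝ 1 (fun s => φ (h s)) ∧ ∃ a, 0 ≤ a ∧ a < 1 ∧ ∀ s, a ≤ |s| → φ (h s) = 0 := by
  have hop : IsOpen {s | |h s| < ε} := isOpen_lt hc.abs continuous_const
  constructor
  · rw [contDiff_iff_contDiffAt]
    intro s
    by_cases hs : |s| < 1
    · exact hφ.contDiffAt.comp s (hd s hs)
    · push Not at hs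
      refine (contDiffAt_const (c := (0 : ℝ))).congr_of_eventuallyEq ?_
      filter_upwards [hop.mem_nhds (show |h s| < ε by rw [h0 s hs]; simpa using hε)] with t ht
      exact hφ0 _ (le_of_lt ht)
  · obtain ⟨δ1, hδ1, hb1⟩ := Metric.isOpen_iff.1 hop 1 (by simp [h0 1 (by simp), hε])
    obtain ⟨δ2, hδ2, hb2⟩ := Metric.isOpen_iff.1 hop (-1) (by simp [h0 (-1) (by simp), hε])
    have hm : 0 < min (min δ1 δ2) 1 := by positivity
    have m1 : min (min δ1 δ2) 1 ≤ δ1 := (min_le_left _ _).trans (min_le_left _ _)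
    have m2 : min (min δ1 δ2) 1 ≤ δ2 := (min_le_left _ _).trans (min_le_right _ _)
    have m3 : min (min δ1 δ2) 1 ≤ 1 := min_le_right _ _
    refine ⟨1 - min (min δ1 δ2) 1 / 2, by linarith, by linarith, fun s hs => ?_⟩
    apply hφ0
    by_cases h1 : 1 ≤ |s|
    · rw [h0 s h1]; simpa using hε.le
    · push Not at h1
      have hlt := abs_lt.1 h1
      rcases le_abs.1 hs with h2 | h2
      · refine le_of_lt (hb1 ?_)
        rw [Metric.mem_ball, Real.dist_eq, abs_lt]
        constructor <;> linarith
      · refine le_of_lt (hb2 ?_)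
        rw [Metric.mem_ball, Real.dist_eq, abs_lt]
        constructor <;> linarith


/-- Stability inequality: if the tangent map of ω_{μ₁,μ₂} (μ₁, μ₂ ≥ 0 real) is stable,
then for every S¹-invariant C¹ function g on S² vanishing at the poles,
∫ g²|∇ŵ|² ≤ ∫ (¼g² + |∇ĝ|² + g²/(y₁² + y₂²)). -/
theorem statement14 (μ1 μ2 : ℝ) (hμ1 : 0 ≤ μ1) (hμ2 : 0 ≤ μ2)
    (hstab : IsStable (homExt (omegaFam (μ1 : ℂ) (μ2 : ℂ))))
    (g : E3 → ℝ)
    (hg : ContDiffOn ℝ 1 (homExtR g) {(0 : E3)}ᶜ)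
    (hinv : ∀ α : ℝ, ∀ y ∈ sphere2, g (rot3 α y) = g y)
    (hN : g northPole = 0) (hS : g southPole = 0) :
    ∫ y in sphere2, g y ^ 2 * gradSq (homExt (omegaFam (μ1 : ℂ) (μ2 : ℂ))) y ∂surf ≤
      ∫ y in sphere2,
        (1 / 4 * g y ^ 2 + gradSqR (homExtR g) y + g y ^ 2 / ((y 0) ^ 2 + (y 1) ^ 2)) ∂surf := by
  obtain ⟨φ, hφ1, hφ2, hφ3, hφ4, hφ5⟩ := trunc
  set h := hprof g with hh
  set W := gradSq (homExt (omegaFam (μ1 : ℂ) (μ2 : ℂ))) with hW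
  have hhc : Continuous h := hprof_cont g hg
  have hWm : Measurable W := gradSq_measurable _
  have hW0 : ∀ y, 0 ≤ W y := gradSq_nonneg _
  have hms : MeasurableSet sphere2 := Metric.isClosed_sphere.measurableSet
  have hc2 : Measurable (fun y : E3 => y 2) := by fun_prop
  have hhm : Measurable (fun y : E3 => h (y 2)) := hhc.measurable.comp hc2
  set ν := surf.restrict sphere2 with hν
  have hfin : IsFiniteMeasure ν := ⟨by rw [hν, Measure.restrict_apply_univ]; exact surf_finite⟩
  have hae : ∀ᵐ y ∂ν, y ∈ sphere2 := ae_restrict_mem hms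
  have hgh : ∀ y ∈ sphere2, g y = h (y 2) := g_eq_hprof g hinv
  have habs : ∀ y ∈ sphere2, |y 2| ≤ 1 := by
    intro y hy
    have := (mem_sphere2_iff y).1 hy
    rw [← sq_le_one_iff_abs_le_one]
    nlinarith [sq_nonneg (y 0), sq_nonneg (y 1)]
  obtain ⟨M, hM⟩ := gradSqR_bound g hg
  obtain ⟨C, hC⟩ := hprof_sq_bound g hg hN hS
  set R : E3 → ℝ := fun y => 1 / 4 * g y ^ 2 + gradSqR (homExtR g) y + g y ^ 2 / ((y 0) ^ 2 + (y 1) ^ 2) with hR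
  have hR0 : ∀ y, 0 ≤ R y := by
    intro y
    have := gradSqR_nonneg (homExtR g) y
    simp only [hR]
    positivity
  -- integrability of the right-hand side
  have hRint : Integrable R ν := by
    have hC0 : 0 ≤ C := by
      have := hC 0 (by simp)
      nlinarith [sq_nonneg (hprof g 0)]
    have hae2 : (fun y : E3 => 1 / 4 * h (y 2) ^ 2 + gradSqR (homExtR g) y +
        h (y 2) ^ 2 / ((y 0) ^ 2 + (y 1) ^ 2)) =ᵐ[ν] R := by
      filter_upwards [hae] with y hy
      simp only [hR, hgh y hy]
    refine (Integrable.of_bound (C := 1 / 4 * C + M + C) ?_ ?_).congr hae2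
    · have := gradSqR_measurable (homExtR g)
      apply Measurable.aestronglyMeasurable
      fun_prop
    · filter_upwards [hae] with y hy
      have hy1 := (mem_sphere2_iff y).1 hy
      have e : y 0 ^ 2 + y 1 ^ 2 = 1 - y 2 ^ 2 := by linarith
      have b1 := hC _ (habs y hy)
      have p1 : 0 ≤ 1 - y 2 ^ 2 := by rw [← e]; positivity
      have b2 : C * (1 - y 2 ^ 2) ≤ C := by nlinarith [mul_nonneg hC0 (sq_nonneg (y 2))]
      have b3 : h (y 2) ^ 2 / (y 0 ^ 2 + y 1 ^ 2) ≤ C := by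
        rw [e]
        exact div_le_of_le_mul₀ p1 hC0 b1
      have b4 := hM y hy
      have p2 := gradSqR_nonneg (homExtR g) y
      rw [Real.norm_eq_abs, abs_of_nonneg (by positivity)]
      linarith
  have hRI : 0 ≤ ∫ y, R y ∂ν := integral_nonneg hR0
  -- the inequality for truncated profiles
  have hn : ∀ n, ∫⁻ y, ENNReal.ofReal (φ n (h (y 2)) ^ 2 * W y) ∂ν ≤ ENNReal.ofReal (∫ y, R y ∂ν) := by
    intro n
    obtain ⟨ε, hε, hφ0⟩ := hφ4 n
    obtain ⟨hk, a, ha0, ha, hk0⟩ := trunc_prof h (φ n) hhc (hprof_contDiffAt g hg) (hprof_zero g hN hS)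
      (hφ1 n) ε hε hφ0
    obtain ⟨hi1, hi2, hle⟩ := main3 μ1 μ2 hstab (fun s => φ n (h s)) a ha0 ha hk hk0
    rw [← ofReal_integral_eq_lintegral_ofReal hi1
      (Filter.Eventually.of_forall fun y => mul_nonneg (sq_nonneg _) (hW0 y))]
    refine ENNReal.ofReal_le_ofReal (hle.trans (integral_mono_ae hi2 hRint ?_))
    filter_upwards [hae] with y hy
    have hy1 := (mem_sphere2_iff y).1 hy
    have e : y 0 ^ 2 + y 1 ^ 2 = 1 - y 2 ^ 2 := by linarith
    by_cases hp : |y 2| < 1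
    · have hd : deriv (fun s => φ n (h s)) (y 2) = deriv (φ n) (h (y 2)) * deriv h (y 2) := by
        exact deriv_comp (y 2) ((hφ1 n).differentiable one_ne_zero _)
          ((hprof_contDiffAt g hg _ hp).differentiableAt one_ne_zero)
      have p1 : 0 < 1 - y 2 ^ 2 := by
        have := (sq_lt_one_iff_abs_lt_one (y 2)).2 hp
        linarith
      have q1 : φ n (h (y 2)) ^ 2 ≤ h (y 2) ^ 2 := sq_le_sq.2 (hφ2 n _)
      have q2 : (deriv (φ n) (h (y 2)) * deriv h (y 2)) ^ 2 ≤ deriv h (y 2) ^ 2 := by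
        rw [mul_pow]
        have : deriv (φ n) (h (y 2)) ^ 2 ≤ 1 := by
          rw [sq_le_one_iff_abs_le_one]; exact hφ3 n _
        nlinarith [sq_nonneg (deriv h (y 2))]
      simp only [hR, Jq, hd]
      rw [gradSqR_eq g hg hinv y hy hp, hgh y hy, e, zero_mul, sub_zero, ← hh, ← add_assoc]
      gcongr
    · have h1 : |y 2| = 1 := le_antisymm (habs y hy) (not_lt.1 hp)
      have h2 : 1 - y 2 ^ 2 = 0 := by rw [← sq_abs, h1]; norm_num
      have h3 : φ n (h (y 2)) = 0 := hk0 _ (by rw [h1]; exact ha.le)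
      simp only [Jq, h2, h3]
      simpa using hR0 y
  -- Fatou
  have hfat : ∫⁻ y, ENNReal.ofReal (h (y 2) ^ 2 * W y) ∂ν ≤ ENNReal.ofReal (∫ y, R y ∂ν) := by
    have hlim : ∀ y : E3, Filter.liminf (fun n => ENNReal.ofReal (φ n (h (y 2)) ^ 2 * W y)) Filter.atTop =
        ENNReal.ofReal (h (y 2) ^ 2 * W y) := fun y =>
      (ENNReal.tendsto_ofReal (((hφ5 (h (y 2))).pow 2).mul_const (W y))).liminf_eq
    calc ∫⁻ y, ENNReal.ofReal (h (y 2) ^ 2 * W y) ∂ν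
        = ∫⁻ y, Filter.liminf (fun n => ENNReal.ofReal (φ n (h (y 2)) ^ 2 * W y)) Filter.atTop ∂ν := by
          simp only [hlim]
      _ ≤ Filter.liminf (fun n => ∫⁻ y, ENNReal.ofReal (φ n (h (y 2)) ^ 2 * W y) ∂ν) Filter.atTop := by
          refine lintegral_liminf_le fun n => ?_
          exact ((((hφ1 n).continuous.measurable.comp hhm).pow_const 2).mul hWm).ennreal_ofReal
      _ ≤ ENNReal.ofReal (∫ y, R y ∂ν) :=
          Filter.liminf_le_of_le (by isBoundedDefault) fun b hb => by
            obtain ⟨n, hbn⟩ := hb.exists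
            exact hbn.trans (hn n)
  have hcong : ∫ y, g y ^ 2 * W y ∂ν = ∫ y, h (y 2) ^ 2 * W y ∂ν := by
    refine integral_congr_ae ?_
    filter_upwards [hae] with y hy
    rw [hgh y hy]
  rw [hcong, integral_eq_lintegral_of_nonneg_ae
    (Filter.Eventually.of_forall fun y => mul_nonneg (sq_nonneg _) (hW0 y))
    ((hhm.pow_const 2).mul hWm).aestronglyMeasurable]
  exact ENNReal.toReal_le_of_le_ofReal hRI hfat
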